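/- Let m₁ ∈ ℕ, m₂ ∈ ℝ and ℏ ∈ (0,1]. For each multiindex α ∈ ℕⁿ with |α| ≤ m₁, let p_α : ℝⁿ → ℂ be smooth with sup_{q ∈ ℝⁿ} f(r)^{-|γ'|} |∂_r^{γ₀} ∂_θ^{γ'} p_α(q)| < ∞ for every multiindex γ ∈ ℕⁿ, and define the differential operator P u := Σ_{|α| ≤ m₁} p_α(q) (f(r)^{-1} ℏ D_θ)^{α'} (ℏ D_r)^{α₀} u, where D_r := -i∂_r and D_θ := -i∂_θ. Let a ∈ S^{m₂}_f(ℝ^{2n}) and define b(q, p) := Σ_{|α| ≤ m₁} p_α(q) f(r)^{-|α'|} [ (η + ℏ D_θ)^{α'} (ρ + ℏ D_r)^{α₀} a ](q, p). Then b ∈ S^{m₁+m₂}_f(ℝ^{2n}) and P(Op^1_ℏ(a)u) = Op^1_ℏ(b)u for every u ∈ C_c^∞(ℝⁿ). -/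

import Mathlib

open MeasureTheory Finset

noncomputable section

/-- Points of `ℝⁿ` (with `n = d + 1`) split as `q = (r, θ) ∈ ℝ × ℝ^d`. -/
abbrev Q (d : ℕ) : Type := ℝ × (Fin d → ℝ)

/-- The coordinate direction `∂_r`. -/
def eR (d : ℕ) : Q d := ((1 : ℝ), 0)

/-- The coordinate direction `∂_{θ_i}`. -/
def eTh (d : ℕ) (i : Fin d) : Q d := ((0 : ℝ), Pi.single i 1)

/-- Directional derivative of a complex-valued function. -/
def dirD {E : Type*} [NormedAddCommGroup E] [NormedSpace ℝ E]
    (v : E) (g : E → ℂ) : E → ℂ :=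
  fun x => fderiv ℝ g x v

/-- Multiindices `α = (α₀, α')` split as in the paper. -/
abbrev MIdx (d : ℕ) : Type := ℕ × (Fin d → ℕ)

/-- `|α| = α₀ + |α'|`. -/
def deg {d : ℕ} (α : MIdx d) : ℕ := α.1 + ∑ i, α.2 i

/-- `|α'|`, the angular part of a multiindex. -/
def degA {d : ℕ} (α : MIdx d) : ℕ := ∑ i, α.2 i

/-- `∂_q^α` acting on functions on `ℝⁿ = ℝ × ℝ^d`. -/
def mderiv1 {d : ℕ} (α : MIdx d) (g : Q d → ℂ) : Q d → ℂ :=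
  (dirD (eR d))^[α.1] <|
    (List.finRange d).foldr (fun i h => (dirD (eTh d i))^[α.2 i] h) g

/-- `∂_q^α ∂_p^β` acting on functions on phase space. -/
def mderiv2 {d : ℕ} (α β : MIdx d) (g : Q d × Q d → ℂ) : Q d × Q d → ℂ :=
  (dirD ((eR d, 0) : Q d × Q d))^[α.1] <|
  (List.finRange d).foldr (fun i h => (dirD ((eTh d i, 0) : Q d × Q d))^[α.2 i] h) <|
  (dirD (((0 : Q d), eR d) : Q d × Q d))^[β.1] <|
  (List.finRange d).foldr (fun i h => (dirD (((0 : Q d), eTh d i) : Q d × Q d))^[β.2 i] h) g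

/-- `∂_q^α ∂_p^β ∂_{q'}^γ` acting on amplitudes `a(q, p, q')`. -/
def mderiv3 {d : ℕ} (α β γ : MIdx d) (g : Q d × Q d × Q d → ℂ) : Q d × Q d × Q d → ℂ :=
  (dirD ((eR d, 0, 0) : Q d × Q d × Q d))^[α.1] <|
  (List.finRange d).foldr (fun i h => (dirD ((eTh d i, 0, 0) : Q d × Q d × Q d))^[α.2 i] h) <|
  (dirD (((0 : Q d), eR d, 0) : Q d × Q d × Q d))^[β.1] <|
  (List.finRange d).foldr (fun i h => (dirD (((0 : Q d), eTh d i, 0) : Q d × Q d × Q d))^[β.2 i] h) <|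
  (dirD (((0 : Q d), (0 : Q d), eR d) : Q d × Q d × Q d))^[γ.1] <|
  (List.finRange d).foldr (fun i h => (dirD (((0 : Q d), (0 : Q d), eTh d i) : Q d × Q d × Q d))^[γ.2 i] h) g

/-- `⟨p⟩ = (1 + ρ² + |η|²)^{1/2}`. -/
def brP {d : ℕ} (p : Q d) : ℝ := Real.sqrt (1 + p.1 ^ 2 + ∑ i, (p.2 i) ^ 2)

/-- `⟨ρ ⊕ f(r)⁻¹ η⟩` evaluated at a phase-space point. -/
def brF {d : ℕ} (f : ℝ → ℝ) (x : Q d × Q d) : ℝ :=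
  Real.sqrt (1 + x.2.1 ^ 2 + ∑ i, (x.2.2 i / f x.1.1) ^ 2)

/-- The standing assumption on `f : ℝ → [1, ∞)`: smooth, `f ≥ 1`, and all derivatives
of `log f` of order `≥ 1` are bounded. -/
def GoodF (f : ℝ → ℝ) : Prop :=
  ContDiff ℝ (⊤ : ℕ∞) f ∧ (∀ r, 1 ≤ f r) ∧
    ∀ j : ℕ, 1 ≤ j → ∃ C : ℝ, ∀ r, |iteratedDeriv j (fun s => Real.log (f s)) r| ≤ C

/-- Membership in the symbol class `S^m_f(ℝ^{2n})`. -/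
def IsSymbol {d : ℕ} (f : ℝ → ℝ) (m : ℝ) (a : Q d × Q d → ℂ) : Prop :=
  ContDiff ℝ (⊤ : ℕ∞) a ∧
    ∀ α β : MIdx d, ∃ C : ℝ, ∀ x : Q d × Q d,
      ‖mderiv2 α β a x‖ ≤ C * f x.1.1 ^ ((degA α : ℝ) - (degA β : ℝ)) * brF f x ^ (m - (deg β : ℝ))

/-- The finite set of multiindices of length `≤ N`. -/
def idxSet (d N : ℕ) : Finset (MIdx d) :=
  ((Finset.range (N + 1)) ×ˢ Fintype.piFinset fun _ : Fin d => Finset.range (N + 1)).filter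
    fun α => deg α ≤ N

/-- The seminorm `|a|_{S^m_f, N}`. -/
def symNorm {d : ℕ} (f : ℝ → ℝ) (m : ℝ) (N : ℕ) (a : Q d × Q d → ℂ) : ℝ :=
  ∑ α ∈ idxSet d N, ∑ β ∈ idxSet d N,
    if deg α + deg β ≤ N then
      ⨆ x : Q d × Q d,
        f x.1.1 ^ (-(degA α : ℝ) + (degA β : ℝ)) * brF f x ^ (-m + (deg β : ℝ)) *
          ‖mderiv2 α β a x‖
    else 0

/-- `p · q`. -/
def qdot {d : ℕ} (p q : Q d) : ℝ := p.1 * q.1 + ∑ i, p.2 i * q.2 i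

/-- The oscillating factor `e^{i p · v / ℏ}`. -/
def ephase {d : ℕ} (ℏ : ℝ) (p v : Q d) : ℂ :=
  Complex.exp (Complex.I * Complex.ofReal (qdot p v) / Complex.ofReal ℏ)

/-- The quantization `Op^t_ℏ(a)` of a symbol, acting on functions (trivialized half-densities). -/
def Op {d : ℕ} (ℏ t : ℝ) (a : Q d × Q d → ℂ) (u : Q d → ℂ) : Q d → ℂ :=
  fun q => ((2 * Real.pi * ℏ) ^ (d + 1) : ℝ)⁻¹ •
    ∫ p : Q d, ∫ q' : Q d,
      a (t • q + (1 - t) • q', p) * ephase ℏ p (q - q') * u q'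

/-- Membership in `C_c^∞(ℝⁿ)`. -/
def IsCc {d : ℕ} (u : Q d → ℂ) : Prop := ContDiff ℝ (⊤ : ℕ∞) u ∧ HasCompactSupport u

/-- The `L²` inner product `⟨w, v⟩ = ∫ w \bar v`. -/
def l2inner {d : ℕ} (w v : Q d → ℂ) : ℂ := ∫ q : Q d, w q * (starRingEnd ℂ) (v q)

/-- The `L²` norm. -/
def l2norm {d : ℕ} (u : Q d → ℂ) : ℝ := (∫ q : Q d, ‖u q‖ ^ 2) ^ (1 / 2 : ℝ)

/-- `Σ_{|β| ≤ N} sup |∂^β u|`. -/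
def ckNorm {d : ℕ} (N : ℕ) (u : Q d → ℂ) : ℝ :=
  ∑ β ∈ idxSet d N, ⨆ q : Q d, ‖mderiv1 β u q‖

/-- `⟨ρ ⊕ f(tr + (1-t)r')⁻¹ η⟩` evaluated at a point `(q, p, q')`. -/
def brFA {d : ℕ} (f : ℝ → ℝ) (t : ℝ) (x : Q d × Q d × Q d) : ℝ :=
  Real.sqrt (1 + x.2.1.1 ^ 2 + ∑ i, (x.2.1.2 i / f (t * x.1.1 + (1 - t) * x.2.2.1)) ^ 2)

/-- Membership in the amplitude class `BS^m_{f,t}(ℝ^{3n})`. -/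
def IsAmp {d : ℕ} (f : ℝ → ℝ) (m t : ℝ) (a : Q d × Q d × Q d → ℂ) : Prop :=
  ContDiff ℝ (⊤ : ℕ∞) a ∧
    ∀ α β γ : MIdx d, ∃ C : ℝ, ∀ x : Q d × Q d × Q d,
      ‖mderiv3 α β γ a x‖ ≤
        C * f (t * x.1.1 + (1 - t) * x.2.2.1) ^ ((degA α : ℝ) - (degA β : ℝ) + (degA γ : ℝ)) *
          brFA f t x ^ (m - (deg β : ℝ))

/-- The seminorm `|a|_{BS^m_{f,t}, N}`. -/
def ampNorm {d : ℕ} (f : ℝ → ℝ) (m t : ℝ) (N : ℕ) (a : Q d × Q d × Q d → ℂ) : ℝ :=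
  ∑ α ∈ idxSet d N, ∑ β ∈ idxSet d N, ∑ γ ∈ idxSet d N,
    if deg α + deg β + deg γ ≤ N then
      ⨆ x : Q d × Q d × Q d,
        f (t * x.1.1 + (1 - t) * x.2.2.1) ^ (-(degA α : ℝ) + (degA β : ℝ) - (degA γ : ℝ)) *
          brFA f t x ^ (-m + (deg β : ℝ)) * ‖mderiv3 α β γ a x‖
    else 0

/-- The quantization of an amplitude `a(q, p, q')`. -/
def OpAmp {d : ℕ} (ℏ : ℝ) (a : Q d × Q d × Q d → ℂ) (u : Q d → ℂ) : Q d → ℂ :=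
  fun q => ((2 * Real.pi * ℏ) ^ (d + 1) : ℝ)⁻¹ •
    ∫ p : Q d, ∫ q' : Q d, a (q, p, q') * ephase ℏ p (q - q') * u q'


/-- `ℏ D_r = -iℏ ∂_r`. -/
def hbarDr (d : ℕ) (ℏ : ℝ) (g : Q d → ℂ) : Q d → ℂ :=
  fun q => (ℏ : ℂ) * (-Complex.I) * dirD (eR d) g q

/-- `f(r)⁻¹ ℏ D_{θ_i}`. -/
def hbarDθ (d : ℕ) (f : ℝ → ℝ) (ℏ : ℝ) (i : Fin d) (g : Q d → ℂ) : Q d → ℂ :=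
  fun q => (Complex.ofReal (f q.1))⁻¹ * (ℏ : ℂ) * (-Complex.I) * dirD (eTh d i) g q

/-- The differential operator `P u = Σ_{|α| ≤ m₁} p_α (f(r)⁻¹ ℏ D_θ)^{α'} (ℏ D_r)^{α₀} u`. -/
def diffOp (d : ℕ) (f : ℝ → ℝ) (ℏ : ℝ) (m₁ : ℕ) (pc : MIdx d → Q d → ℂ)
    (u : Q d → ℂ) : Q d → ℂ :=
  fun q => ∑ α ∈ idxSet d m₁,
    pc α q * ((List.finRange d).foldr (fun i h => (hbarDθ d f ℏ i)^[α.2 i] h)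
      ((hbarDr d ℏ)^[α.1] u)) q

/-- `ρ + ℏ D_r` acting on symbols (in the `q`-slot). -/
def rhoAdd (d : ℕ) (ℏ : ℝ) (g : Q d × Q d → ℂ) : Q d × Q d → ℂ :=
  fun x => Complex.ofReal x.2.1 * g x +
    (ℏ : ℂ) * (-Complex.I) * dirD ((eR d, 0) : Q d × Q d) g x

/-- `η_i + ℏ D_{θ_i}` acting on symbols (in the `q`-slot). -/
def etaAdd (d : ℕ) (ℏ : ℝ) (i : Fin d) (g : Q d × Q d → ℂ) : Q d × Q d → ℂ :=
  fun x => Complex.ofReal (x.2.2 i) * g x +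
    (ℏ : ℂ) * (-Complex.I) * dirD ((eTh d i, 0) : Q d × Q d) g x

/-- The symbol `b(q,p) = Σ_α p_α(q) f(r)^{-|α'|} ((η + ℏD_θ)^{α'} (ρ + ℏD_r)^{α₀} a)(q,p)`. -/
def symbOfDiff (d : ℕ) (f : ℝ → ℝ) (ℏ : ℝ) (m₁ : ℕ) (pc : MIdx d → Q d → ℂ)
    (a : Q d × Q d → ℂ) : Q d × Q d → ℂ :=
  fun x => ∑ α ∈ idxSet d m₁,
    pc α x.1 * (Complex.ofReal (f x.1.1 ^ degA α))⁻¹ *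
      ((List.finRange d).foldr (fun i h => (etaAdd d ℏ i)^[α.2 i] h)
        ((rhoAdd d ℏ)^[α.1] a)) x

section aux

theorem sm_dirD {E : Type*} [NormedAddCommGroup E] [NormedSpace ℝ E] (v : E) {g : E → ℂ}
    (hg : ContDiff ℝ (⊤ : ℕ∞) g) : ContDiff ℝ (⊤ : ℕ∞) (dirD v g) := by
  unfold dirD
  exact (hg.fderiv_right (m := (⊤ : ℕ∞)) (by norm_cast)).clm_apply contDiff_const

theorem sm_diff {E : Type*} [NormedAddCommGroup E] [NormedSpace ℝ E] {g : E → ℂ}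
    (hg : ContDiff ℝ (⊤ : ℕ∞) g) : Differentiable ℝ g :=
  hg.differentiable (by simp)

theorem dirD_dirD_apply {E : Type*} [NormedAddCommGroup E] [NormedSpace ℝ E] (v w : E) {g : E → ℂ}
    (hg : ContDiff ℝ (⊤ : ℕ∞) g) (x : E) :
    dirD v (dirD w g) x = fderiv ℝ (fderiv ℝ g) x v w := by
  have h1 : DifferentiableAt ℝ (fderiv ℝ g) x :=
    ((hg.fderiv_right (m := (⊤ : ℕ∞)) (by norm_cast)).differentiable (by simp)) x
  change fderiv ℝ (fun y => fderiv ℝ g y w) x v = _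
  rw [fderiv_clm_apply h1 (differentiableAt_const w)]
  simp

theorem dirD_comm {E : Type*} [NormedAddCommGroup E] [NormedSpace ℝ E] (v w : E) {g : E → ℂ}
    (hg : ContDiff ℝ (⊤ : ℕ∞) g) : dirD v (dirD w g) = dirD w (dirD v g) := by
  funext x
  rw [dirD_dirD_apply v w hg, dirD_dirD_apply w v hg]
  exact (hg.contDiffAt.isSymmSndFDerivAt (by simp only [minSmoothness_of_isRCLikeNormedField]; norm_cast)).eq v w

theorem dirD_mul {E : Type*} [NormedAddCommGroup E] [NormedSpace ℝ E] (v : E) {g h : E → ℂ}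
    (hg : Differentiable ℝ g) (hh : Differentiable ℝ h) :
    dirD v (fun x => g x * h x) = fun x => g x * dirD v h x + h x * dirD v g x := by
  funext x
  unfold dirD
  rw [fderiv_fun_mul (hg x) (hh x)]
  simp

theorem dirD_add {E : Type*} [NormedAddCommGroup E] [NormedSpace ℝ E] (v : E) {g h : E → ℂ}
    (hg : Differentiable ℝ g) (hh : Differentiable ℝ h) :
    dirD v (fun x => g x + h x) = fun x => dirD v g x + dirD v h x := by
  funext x
  unfold dirD
  rw [fderiv_fun_add (hg x) (hh x)]
  simp

/-- `T` preserves smooth functions and commutes with `dirD v` on them. -/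
def PC {E : Type*} [NormedAddCommGroup E] [NormedSpace ℝ E] (v : E) (T : (E → ℂ) → (E → ℂ)) : Prop :=
  ∀ g, ContDiff ℝ (⊤ : ℕ∞) g → ContDiff ℝ (⊤ : ℕ∞) (T g) ∧ dirD v (T g) = T (dirD v g)

theorem PC.base {E : Type*} [NormedAddCommGroup E] [NormedSpace ℝ E] (v w : E) : PC v (dirD w) :=
  fun _ hg => ⟨sm_dirD w hg, dirD_comm v w hg⟩

theorem PC.iter {E : Type*} [NormedAddCommGroup E] [NormedSpace ℝ E] {v : E}
    {T : (E → ℂ) → (E → ℂ)} (hT : PC v T) (n : ℕ) : PC v (T^[n]) := by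
  induction n with
  | zero => intro g hg; exact ⟨hg, rfl⟩
  | succ n ih =>
    intro g hg
    have h := ih g hg
    rw [Function.iterate_succ_apply', Function.iterate_succ_apply']
    exact ⟨(hT _ h.1).1, by rw [(hT _ h.1).2, h.2]⟩

theorem PC.fold {E : Type*} [NormedAddCommGroup E] [NormedSpace ℝ E] {ι : Type*} {v : E}
    (w : ι → E) (n : ι → ℕ) (l : List ι) :
    PC v (fun g => l.foldr (fun i h => (dirD (w i))^[n i] h) g) := by
  induction l with
  | nil => intro g hg; exact ⟨hg, rfl⟩
  | cons j t ih =>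
    intro g hg
    have h := ih g hg
    have h2 := PC.iter (PC.base v (w j)) (n j) _ h.1
    refine ⟨h2.1, ?_⟩
    simp only [List.foldr_cons] at *
    rw [h2.2, h.2]

theorem fold_congr {E : Type*} [NormedAddCommGroup E] [NormedSpace ℝ E] {ι : Type*}
    (w : ι → E) (n n' : ι → ℕ) (l : List ι) (h : ∀ i ∈ l, n i = n' i) (g : E → ℂ) :
    l.foldr (fun i h => (dirD (w i))^[n i] h) g = l.foldr (fun i h => (dirD (w i))^[n' i] h) g := by
  induction l with
  | nil => rfl
  | cons j t ih =>
    simp only [List.foldr_cons]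
    rw [ih (fun i hi => h i (List.mem_cons_of_mem _ hi)), h j List.mem_cons_self]

theorem fold_succ {E : Type*} [NormedAddCommGroup E] [NormedSpace ℝ E] {ι : Type*} [DecidableEq ι]
    (w : ι → E) (n : ι → ℕ) (l : List ι) (hl : l.Nodup) (i : ι) (hi : i ∈ l) {g : E → ℂ}
    (hg : ContDiff ℝ (⊤ : ℕ∞) g) :
    dirD (w i) (l.foldr (fun i h => (dirD (w i))^[n i] h) g) =
      l.foldr (fun j h => (dirD (w j))^[(n + Pi.single i 1 : ι → ℕ) j] h) g := by
  induction l with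
  | nil => simp at hi
  | cons j t ih =>
    simp only [List.foldr_cons]
    rw [List.nodup_cons] at hl
    by_cases hij : i = j
    · subst hij
      rw [← fold_congr w n (n + Pi.single i 1 : ι → ℕ) t]
      · rw [← Function.iterate_succ_apply' (dirD (w i))]
        simp
      · intro k hk
        have : k ≠ i := fun h => hl.1 (h ▸ hk)
        simp [this]
    · have hi' : i ∈ t := by simpa [hij] using hi
      rw [(PC.iter (PC.base (w i) (w j)) (n j) _ (PC.fold (v := w i) w n t g hg).1).2, ih hl.2 hi']
      simp [Ne.symm hij]

variable {d : ℕ}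

theorem mderiv1_r (γ : MIdx d) (g : Q d → ℂ) :
    dirD (eR d) (mderiv1 γ g) = mderiv1 (γ.1 + 1, γ.2) g := by
  unfold mderiv1
  rw [Function.iterate_succ_apply']

theorem mderiv1_th (γ : MIdx d) (i : Fin d) {g : Q d → ℂ} (hg : ContDiff ℝ (⊤ : ℕ∞) g) :
    dirD (eTh d i) (mderiv1 γ g) = mderiv1 (γ.1, γ.2 + Pi.single i 1) g := by
  unfold mderiv1
  rw [(PC.iter (PC.base (eTh d i) (eR d)) _ _ (PC.fold (v := eTh d i) _ _ _ g hg).1).2,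
    fold_succ (eTh d) γ.2 _ (List.nodup_finRange d) i (List.mem_finRange i) hg]

theorem mderiv1_smooth (γ : MIdx d) {g : Q d → ℂ} (hg : ContDiff ℝ (⊤ : ℕ∞) g) :
    ContDiff ℝ (⊤ : ℕ∞) (mderiv1 γ g) :=
  (PC.iter (PC.base 0 (eR d)) _ _ (PC.fold (v := 0) _ _ _ g hg).1).1

/-- The coordinate directions of phase space. -/
inductive Dir (d : ℕ) : Type
  | r : Dir d
  | th : Fin d → Dir d
  | rho : Dir d
  | eta : Fin d → Dir d

def Dir.vec : Dir d → Q d × Q d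
  | .r => (eR d, 0)
  | .th i => (eTh d i, 0)
  | .rho => (0, eR d)
  | .eta i => (0, eTh d i)

def Dir.dk : Dir d → ℝ
  | .r => 0
  | .th _ => 1
  | .rho => 0
  | .eta _ => -1

def Dir.dm : Dir d → ℝ
  | .r => 0
  | .th _ => 0
  | .rho => -1
  | .eta _ => -1

def Dir.bump : Dir d → MIdx d × MIdx d → MIdx d × MIdx d
  | .r, p => ((p.1.1 + 1, p.1.2), p.2)
  | .th i, p => ((p.1.1, p.1.2 + Pi.single i 1), p.2)
  | .rho, p => (p.1, (p.2.1 + 1, p.2.2))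
  | .eta i, p => (p.1, (p.2.1, p.2.2 + Pi.single i 1))

theorem mderiv2_smooth (α β : MIdx d) {g : Q d × Q d → ℂ} (hg : ContDiff ℝ (⊤ : ℕ∞) g) :
    ContDiff ℝ (⊤ : ℕ∞) (mderiv2 α β g) :=
  (PC.iter (PC.base 0 _) _ _ (PC.fold (v := 0) _ _ _ _
    (PC.iter (PC.base 0 _) _ _ (PC.fold (v := 0) _ _ _ g hg).1).1).1).1

theorem mderiv2_bump (j : Dir d) (α β : MIdx d) {g : Q d × Q d → ℂ}
    (hg : ContDiff ℝ (⊤ : ℕ∞) g) :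
    dirD j.vec (mderiv2 α β g) = mderiv2 (j.bump (α, β)).1 (j.bump (α, β)).2 g := by
  have h1 := (PC.fold (v := j.vec) (fun i => (((0 : Q d), eTh d i) : Q d × Q d)) β.2
    (List.finRange d) g hg)
  have h2 := PC.iter (PC.base j.vec (((0 : Q d), eR d) : Q d × Q d)) β.1 _ h1.1
  have h3 := (PC.fold (v := j.vec) (fun i => ((eTh d i, (0 : Q d)) : Q d × Q d)) α.2
    (List.finRange d) _ h2.1)
  have h4 := PC.iter (PC.base j.vec ((eR d, (0 : Q d)) : Q d × Q d)) α.1 _ h3.1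
  cases j with
  | r =>
    simp only [Dir.vec, Dir.bump, mderiv2]
    rw [Function.iterate_succ_apply']
  | th i =>
    simp only [Dir.vec, Dir.bump, mderiv2] at *
    rw [h4.2, fold_succ (fun i => ((eTh d i, (0 : Q d)) : Q d × Q d)) α.2 _
      (List.nodup_finRange d) i (List.mem_finRange i) h2.1]
  | rho =>
    simp only [Dir.vec, Dir.bump, mderiv2] at *
    rw [h4.2, h3.2, Function.iterate_succ_apply']
  | eta i =>
    simp only [Dir.vec, Dir.bump, mderiv2] at *
    rw [h4.2, h3.2, h2.2, fold_succ (fun i => (((0 : Q d), eTh d i) : Q d × Q d)) β.2 _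
      (List.nodup_finRange d) i (List.mem_finRange i) hg]

/-- Symbol bounds for words of length `≤ N`, weight `f^k ⟨⟩^m`. -/
def SymN (f : ℝ → ℝ) : ℕ → ℝ → ℝ → (Q d × Q d → ℂ) → Prop
  | 0, k, m, a => ∃ C : ℝ, ∀ x, ‖a x‖ ≤ C * f x.1.1 ^ k * brF f x ^ m
  | N + 1, k, m, a => (∃ C : ℝ, ∀ x, ‖a x‖ ≤ C * f x.1.1 ^ k * brF f x ^ m) ∧
      ∀ j : Dir d, SymN f N (k + j.dk) (m + j.dm) (dirD j.vec a)

def FSym (f : ℝ → ℝ) (k m : ℝ) (a : Q d × Q d → ℂ) : Prop :=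
  ContDiff ℝ (⊤ : ℕ∞) a ∧ ∀ N, SymN f N k m a

theorem SymN.bound {f : ℝ → ℝ} {N : ℕ} {k m : ℝ} {a : Q d × Q d → ℂ} (h : SymN f N k m a) :
    ∃ C : ℝ, ∀ x, ‖a x‖ ≤ C * f x.1.1 ^ k * brF f x ^ m := by
  cases N with
  | zero => exact h
  | succ N => exact h.1

theorem SymN.down {f : ℝ → ℝ} {N : ℕ} {k m : ℝ} {a : Q d × Q d → ℂ} (h : SymN f (N + 1) k m a) :
    SymN f N k m a := by
  induction N generalizing k m a with
  | zero => exact h.1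
  | succ N ih => exact ⟨h.1, fun j => ih (h.2 j)⟩

theorem SymN.cast {f : ℝ → ℝ} {N : ℕ} {k m k' m' : ℝ} {a : Q d × Q d → ℂ} (h : SymN f N k m a)
    (hk : k = k') (hm : m = m') : SymN f N k' m' a := by
  subst hk hm; exact h

theorem brF_ge (f : ℝ → ℝ) (x : Q d × Q d) : 1 ≤ brF f x := by
  unfold brF
  rw [Real.one_le_sqrt]
  have : 0 ≤ ∑ i, (x.2.2 i / f x.1.1) ^ 2 := Finset.sum_nonneg fun i _ => sq_nonneg _
  nlinarith [sq_nonneg x.2.1]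

theorem SymN.bound' {f : ℝ → ℝ} (hf : ∀ r, 1 ≤ f r) {N : ℕ} {k m : ℝ} {a : Q d × Q d → ℂ}
    (h : SymN f N k m a) :
    ∃ C : ℝ, 0 ≤ C ∧ ∀ x, ‖a x‖ ≤ C * f x.1.1 ^ k * brF f x ^ m := by
  obtain ⟨C, hC⟩ := h.bound
  refine ⟨|C|, abs_nonneg _, fun x => (hC x).trans ?_⟩
  have := zero_lt_one.trans_le (hf x.1.1)
  have := zero_lt_one.trans_le (brF_ge f x)
  gcongr
  exact le_abs_self C

theorem SymN.add {f : ℝ → ℝ} {N : ℕ} {k m : ℝ} {a b : Q d × Q d → ℂ}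
    (sa : ContDiff ℝ (⊤ : ℕ∞) a) (sb : ContDiff ℝ (⊤ : ℕ∞) b)
    (ha : SymN f N k m a) (hb : SymN f N k m b) : SymN f N k m (fun x => a x + b x) := by
  have key : ∃ C : ℝ, ∀ x, ‖a x + b x‖ ≤ C * f x.1.1 ^ k * brF f x ^ m := by
    obtain ⟨C, hC⟩ := ha.bound
    obtain ⟨D, hD⟩ := hb.bound
    refine ⟨C + D, fun x => (norm_add_le _ _).trans ?_⟩
    linarith [hC x, hD x]
  induction N generalizing k m a b with
  | zero => exact key
  | succ N ih =>
    refine ⟨key, fun j => ?_⟩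
    rw [dirD_add _ (sm_diff sa) (sm_diff sb)]
    apply ih (sm_dirD _ sa) (sm_dirD _ sb) (ha.2 j) (hb.2 j)
    obtain ⟨C, hC⟩ := (ha.2 j).bound
    obtain ⟨D, hD⟩ := (hb.2 j).bound
    refine ⟨C + D, fun x => (norm_add_le _ _).trans ?_⟩
    linarith [hC x, hD x]

theorem SymN.mul {f : ℝ → ℝ} (hf : ∀ r, 1 ≤ f r) {N : ℕ} {k m k' m' : ℝ} {a b : Q d × Q d → ℂ}
    (sa : ContDiff ℝ (⊤ : ℕ∞) a) (sb : ContDiff ℝ (⊤ : ℕ∞) b)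
    (ha : SymN f N k m a) (hb : SymN f N k' m' b) :
    SymN f N (k + k') (m + m') (fun x => a x * b x) := by
  induction N generalizing k m k' m' a b with
  | zero =>
    obtain ⟨C, hC0, hC⟩ := ha.bound' hf
    obtain ⟨D, hD0, hD⟩ := hb.bound' hf
    refine ⟨C * D, fun x => ?_⟩
    have h1 := zero_lt_one.trans_le (hf x.1.1)
    have h2 := zero_lt_one.trans_le (brF_ge f x)
    rw [norm_mul, Real.rpow_add h1, Real.rpow_add h2]
    calc _ ≤ (C * f x.1.1 ^ k * brF f x ^ m) * (D * f x.1.1 ^ k' * brF f x ^ m') := by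
          gcongr
          · exact hC x
          · exact hD x
      _ = _ := by ring
  | succ N ih =>
    refine ⟨(ih sa sb ha.down hb.down).bound, fun j => ?_⟩
    rw [dirD_mul _ (sm_diff sa) (sm_diff sb)]
    refine SymN.add (sa.mul (sm_dirD _ sb)) (sb.mul (sm_dirD _ sa)) ?_ ?_
    · exact (ih sa (sm_dirD _ sb) ha.down (hb.2 j)).cast (by ring) (by ring)
    · exact (ih sb (sm_dirD _ sa) hb.down (ha.2 j)).cast (by ring) (by ring)

theorem SymN.mono {f : ℝ → ℝ} (hf : ∀ r, 1 ≤ f r) {N : ℕ} {k m m' : ℝ} {a : Q d × Q d → ℂ}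
    (ha : SymN f N k m a) (hm : m ≤ m') : SymN f N k m' a := by
  have key : ∃ C : ℝ, ∀ x, ‖a x‖ ≤ C * f x.1.1 ^ k * brF f x ^ m' := by
    obtain ⟨C, hC0, hC⟩ := ha.bound' hf
    refine ⟨C, fun x => (hC x).trans ?_⟩
    have h1 := zero_lt_one.trans_le (hf x.1.1)
    have := Real.rpow_le_rpow_of_exponent_le (brF_ge f x) hm
    gcongr
  induction N generalizing k m m' a with
  | zero => exact key
  | succ N ih =>
    refine ⟨key, fun j => ih (ha.2 j) (by linarith) ?_⟩
    obtain ⟨C, hC0, hC⟩ := (ha.2 j).bound' hf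
    refine ⟨C, fun x => (hC x).trans ?_⟩
    have h1 := zero_lt_one.trans_le (hf x.1.1)
    have : m + j.dm ≤ m' + j.dm := by linarith
    have := Real.rpow_le_rpow_of_exponent_le (brF_ge f x) this
    gcongr

theorem dirD_zero' {E : Type*} [NormedAddCommGroup E] [NormedSpace ℝ E] (v : E) (c : ℂ) :
    dirD v (fun _ : E => c) = fun _ => 0 := by
  funext x; simp [dirD]

theorem SymN.zero (f : ℝ → ℝ) (N : ℕ) (k m : ℝ) :
    SymN f N k m (fun _ : Q d × Q d => (0 : ℂ)) := by
  induction N generalizing k m with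
  | zero => exact ⟨0, by simp⟩
  | succ N ih => exact ⟨⟨0, by simp⟩, fun j => by rw [dirD_zero']; exact ih _ _⟩

theorem SymN.const (f : ℝ → ℝ) (N : ℕ) (c : ℂ) :
    SymN f N 0 0 (fun _ : Q d × Q d => c) := by
  cases N with
  | zero => exact ⟨‖c‖, by simp⟩
  | succ N => exact ⟨⟨‖c‖, by simp⟩, fun j => by rw [dirD_zero']; exact SymN.zero _ _ _ _⟩

theorem FSym.add {f : ℝ → ℝ} {k m : ℝ} {a b : Q d × Q d → ℂ}
    (ha : FSym f k m a) (hb : FSym f k m b) : FSym f k m (fun x => a x + b x) :=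
  ⟨ha.1.add hb.1, fun N => (ha.2 N).add ha.1 hb.1 (hb.2 N)⟩

theorem FSym.mul {f : ℝ → ℝ} (hf : ∀ r, 1 ≤ f r) {k m k' m' : ℝ} {a b : Q d × Q d → ℂ}
    (ha : FSym f k m a) (hb : FSym f k' m' b) : FSym f (k + k') (m + m') (fun x => a x * b x) :=
  ⟨ha.1.mul hb.1, fun N => (ha.2 N).mul hf ha.1 hb.1 (hb.2 N)⟩

theorem FSym.mono {f : ℝ → ℝ} (hf : ∀ r, 1 ≤ f r) {k m m' : ℝ} {a : Q d × Q d → ℂ}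
    (ha : FSym f k m a) (hm : m ≤ m') : FSym f k m' a :=
  ⟨ha.1, fun N => (ha.2 N).mono hf hm⟩

theorem FSym.cast {f : ℝ → ℝ} {k m k' m' : ℝ} {a : Q d × Q d → ℂ} (h : FSym f k m a)
    (hk : k = k') (hm : m = m') : FSym f k' m' a := by
  subst hk hm; exact h

theorem FSym.deriv {f : ℝ → ℝ} {k m : ℝ} {a : Q d × Q d → ℂ} (h : FSym f k m a) (j : Dir d) :
    FSym f (k + j.dk) (m + j.dm) (dirD j.vec a) :=
  ⟨sm_dirD _ h.1, fun N => (h.2 (N + 1)).2 j⟩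

theorem FSym.const (f : ℝ → ℝ) (c : ℂ) : FSym f 0 0 (fun _ : Q d × Q d => c) :=
  ⟨contDiff_const, fun N => SymN.const f N c⟩

theorem FSym.zero (f : ℝ → ℝ) (k m : ℝ) : FSym f k m (fun _ : Q d × Q d => 0) :=
  ⟨contDiff_const, fun N => SymN.zero f N k m⟩

theorem FSym.iter {f : ℝ → ℝ} {k m : ℝ} {a : Q d × Q d → ℂ} (h : FSym f k m a) (j : Dir d) (n : ℕ) :
    FSym f (k + n * j.dk) (m + n * j.dm) ((dirD j.vec)^[n] a) := by
  induction n with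
  | zero => simpa using h
  | succ n ih =>
    rw [Function.iterate_succ_apply']
    exact (ih.deriv j).cast (by push_cast; ring) (by push_cast; ring)

theorem FSym.foldD {f : ℝ → ℝ} {k m : ℝ} {a : Q d × Q d → ℂ} (h : FSym f k m a)
    (J : Fin d → Dir d) (κ μ : ℝ) (hκ : ∀ i, (J i).dk = κ) (hμ : ∀ i, (J i).dm = μ)
    (n : Fin d → ℕ) (l : List (Fin d)) :
    FSym f (k + ((l.map n).sum : ℕ) * κ) (m + ((l.map n).sum : ℕ) * μ)
      (l.foldr (fun i h => (dirD (J i).vec)^[n i] h) a) := by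
  induction l with
  | nil => simpa using h
  | cons i t ih =>
    simp only [List.foldr_cons, List.map_cons, List.sum_cons]
    refine (ih.iter (J i) (n i)).cast ?_ ?_
    · rw [hκ]; push_cast; ring
    · rw [hμ]; push_cast; ring

theorem FSym.isSymbol {f : ℝ → ℝ} {m : ℝ} {a : Q d × Q d → ℂ} (h : FSym f 0 m a) :
    IsSymbol f m a := by
  refine ⟨h.1, fun α β => ?_⟩
  have h1 := h.foldD (fun i => .eta i) (-1) (-1) (fun _ => rfl) (fun _ => rfl) β.2 (List.finRange d)
  have h2 := h1.iter .rho β.1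
  have h3 := h2.foldD (fun i => .th i) 1 0 (fun _ => rfl) (fun _ => rfl) α.2 (List.finRange d)
  have h4 := h3.iter .r α.1
  rw [← Fin.sum_univ_def, ← Fin.sum_univ_def] at h4
  have h5 := (h4.cast (k' := (degA α : ℝ) - (degA β : ℝ)) (m' := m - (deg β : ℝ))
    (by simp only [Dir.dk, degA]; ring) (by simp only [Dir.dm, deg]; push_cast; ring)).2 0
  exact h5

theorem degA_bump (p : MIdx d × MIdx d) (j : Dir d) :
    ((degA (j.bump p).1 : ℝ) - degA (j.bump p).2) = degA p.1 - degA p.2 + j.dk := by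
  cases j <;> simp [Dir.bump, degA, Dir.dk, Finset.sum_add_distrib] <;> ring

theorem deg_bump (p : MIdx d × MIdx d) (j : Dir d) :
    (deg (j.bump p).2 : ℝ) = deg p.2 - j.dm := by
  cases j <;> simp [Dir.bump, deg, Dir.dm, Finset.sum_add_distrib] <;> ring

theorem IsSymbol.fsym {f : ℝ → ℝ} {m : ℝ} {a : Q d × Q d → ℂ} (h : IsSymbol f m a) :
    FSym f 0 m a := by
  refine ⟨h.1, fun N => ?_⟩
  have : ∀ α β : MIdx d, SymN f N ((degA α : ℝ) - degA β) (m - deg β) (mderiv2 α β a) := by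
    induction N with
    | zero => exact fun α β => h.2 α β
    | succ N ih =>
      refine fun α β => ⟨h.2 α β, fun j => ?_⟩
      rw [mderiv2_bump j α β h.1]
      exact (ih _ _).cast (degA_bump (α, β) j) (by rw [deg_bump]; ring)
  have h0 := this (0, 0) (0, 0)
  have e : mderiv2 ((0, 0) : MIdx d) (0, 0) a = a := by
    have : ∀ (l : List (Fin d)) (w : Fin d → Q d × Q d) (g : Q d × Q d → ℂ),
        l.foldr (fun i h => (dirD (w i))^[(0 : Fin d → ℕ) i] h) g = g := by
      intro l w g
      induction l with
      | nil => rfl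
      | cons j t ih => simpa using ih
    unfold mderiv2
    simp [this]
  rw [e] at h0
  exact h0.cast (by simp [degA]) (by simp [deg])

theorem dirD_fst_r (g : Q d → ℂ) (hg : Differentiable ℝ g) (v : Q d × Q d) :
    dirD v (fun x : Q d × Q d => g x.1) = fun x => dirD v.1 g x.1 := by
  funext x
  unfold dirD
  rw [show (fun x : Q d × Q d => g x.1) = g ∘ Prod.fst from rfl,
    fderiv_comp x (hg _) differentiableAt_fst]
  simp [fderiv_fst]

theorem dirD_vzero {E : Type*} [NormedAddCommGroup E] [NormedSpace ℝ E] (g : E → ℂ) :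
    dirD 0 g = fun _ => 0 := by
  funext x; simp [dirD]

theorem sym_coef {f : ℝ → ℝ} (hf : ∀ r, 1 ≤ f r) {p : Q d → ℂ} (hp : ContDiff ℝ (⊤ : ℕ∞) p)
    (hb : ∀ γ : MIdx d, ∃ C : ℝ, ∀ q : Q d, f q.1 ^ (-(degA γ : ℝ)) * ‖mderiv1 γ p q‖ ≤ C) :
    FSym f 0 0 (fun x : Q d × Q d => p x.1) := by
  refine ⟨hp.comp contDiff_fst, fun N => ?_⟩
  have bd : ∀ γ : MIdx d, ∃ C : ℝ, ∀ x : Q d × Q d,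
      ‖mderiv1 γ p x.1‖ ≤ C * f x.1.1 ^ (degA γ : ℝ) * brF f x ^ (0 : ℝ) := by
    intro γ
    obtain ⟨C, hC⟩ := hb γ
    refine ⟨C, fun x => ?_⟩
    have h1 := zero_lt_one.trans_le (hf x.1.1)
    have := hC x.1
    rw [Real.rpow_neg h1.le, inv_mul_le_iff₀ (Real.rpow_pos_of_pos h1 _)] at this
    simpa [mul_comm] using this
  have : ∀ γ : MIdx d, SymN f N (degA γ) 0 (fun x : Q d × Q d => mderiv1 γ p x.1) := by
    induction N with
    | zero => exact bd
    | succ N ih =>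
      refine fun γ => ⟨bd γ, fun j => ?_⟩
      rw [dirD_fst_r _ (sm_diff (mderiv1_smooth γ hp))]
      cases j with
      | r =>
        simp only [Dir.vec, mderiv1_r]
        exact (ih _).cast (by simp [degA, Dir.dk]) (by simp [Dir.dm])
      | th i =>
        simp only [Dir.vec, mderiv1_th _ _ hp]
        exact (ih _).cast (by simp [degA, Dir.dk, Finset.sum_add_distrib]) (by simp [Dir.dm])
      | rho => simp only [Dir.vec, dirD_vzero]; exact SymN.zero _ _ _ _
      | eta i => simp only [Dir.vec, dirD_vzero]; exact SymN.zero _ _ _ _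
  have h0 := this (0, 0)
  have e : mderiv1 ((0, 0) : MIdx d) p = p := by
    have : ∀ (l : List (Fin d)) (w : Fin d → Q d) (g : Q d → ℂ),
        l.foldr (fun i h => (dirD (w i))^[(0 : Fin d → ℕ) i] h) g = g := by
      intro l w g
      induction l with
      | nil => rfl
      | cons j t ih => simpa using ih
    unfold mderiv1
    simp [this]
  rw [e] at h0
  exact h0.cast (by simp [degA]) rfl

theorem dirD_radial {h : ℝ → ℝ} (hh : Differentiable ℝ h) (v : Q d × Q d) :
    dirD v (fun x : Q d × Q d => (h x.1.1 : ℂ)) =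
      fun x => (v.1.1 : ℂ) * ((deriv h x.1.1 : ℝ) : ℂ) := by
  funext x
  unfold dirD
  have h1 : HasDerivAt (fun t : ℝ => (h t : ℂ)) ((deriv h x.1.1 : ℝ) : ℂ) x.1.1 :=
    (hh x.1.1).hasDerivAt.ofReal_comp
  have h2 : HasFDerivAt (fun x : Q d × Q d => x.1.1)
      ((ContinuousLinearMap.fst ℝ ℝ (Fin d → ℝ)).comp (ContinuousLinearMap.fst ℝ (Q d) (Q d))) x :=
    ((ContinuousLinearMap.fst ℝ ℝ (Fin d → ℝ)).comp
      (ContinuousLinearMap.fst ℝ (Q d) (Q d))).hasFDerivAt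
  have h3 := h1.hasFDerivAt.comp x h2
  have h4 : HasFDerivAt (fun x : Q d × Q d => (h x.1.1 : ℂ)) _ x := h3
  rw [h4.fderiv]
  simp

theorem smooth_radial {h : ℝ → ℝ} (hh : ContDiff ℝ (⊤ : ℕ∞) h) :
    ContDiff ℝ (⊤ : ℕ∞) (fun x : Q d × Q d => (h x.1.1 : ℂ)) :=
  Complex.ofRealCLM.contDiff.comp (hh.comp (contDiff_fst.comp contDiff_fst))

theorem symN_radial {f : ℝ → ℝ} (N : ℕ) {h : ℝ → ℝ} (hh : ContDiff ℝ (⊤ : ℕ∞) h)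
    (hb : ∀ j, ∃ C, ∀ r, |iteratedDeriv j h r| ≤ C) :
    SymN f N 0 0 (fun x : Q d × Q d => (h x.1.1 : ℂ)) := by
  have bd : ∃ C : ℝ, ∀ x : Q d × Q d, ‖(h x.1.1 : ℂ)‖ ≤ C * f x.1.1 ^ (0 : ℝ) * brF f x ^ (0 : ℝ) := by
    obtain ⟨C, hC⟩ := hb 0
    refine ⟨C, fun x => ?_⟩
    simpa using hC x.1.1
  induction N generalizing h with
  | zero => exact bd
  | succ N ih =>
    refine ⟨bd, fun j => ?_⟩
    rw [dirD_radial (hh.differentiable (by simp))]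
    have hd : ContDiff ℝ (⊤ : ℕ∞) (deriv h) := by
      have := hh.iterate_deriv 1
      simpa using this
    have hb' : ∀ j, ∃ C, ∀ r, |iteratedDeriv j (deriv h) r| ≤ C := by
      intro j
      obtain ⟨C, hC⟩ := hb (j + 1)
      refine ⟨C, fun r => ?_⟩
      rw [← iteratedDeriv_succ']
      exact hC r
    cases j with
    | r =>
      simp only [Dir.vec, eR, Dir.dk, Dir.dm, Complex.ofReal_one, one_mul, add_zero]
      refine ih hd hb' ?_
      obtain ⟨C, hC⟩ := hb' 0
      refine ⟨C, fun x => ?_⟩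
      simpa using hC x.1.1
    | th i => simp only [Dir.vec, eTh, Complex.ofReal_zero, zero_mul]; exact SymN.zero _ _ _ _
    | rho => simp only [Dir.vec, Prod.fst_zero, Complex.ofReal_zero, zero_mul]; exact SymN.zero _ _ _ _
    | eta i => simp only [Dir.vec, Prod.fst_zero, Complex.ofReal_zero, zero_mul]; exact SymN.zero _ _ _ _

theorem sym_inv {f : ℝ → ℝ} (hf : GoodF f) :
    FSym f (-1) 0 (fun x : Q d × Q d => (((f x.1.1)⁻¹ : ℝ) : ℂ)) := by
  obtain ⟨sf, f1, fb⟩ := hf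
  have fpos : ∀ r, 0 < f r := fun r => zero_lt_one.trans_le (f1 r)
  have si : ContDiff ℝ (⊤ : ℕ∞) (fun r => (f r)⁻¹) := sf.inv fun r => (fpos r).ne'
  have sl : ContDiff ℝ (⊤ : ℕ∞) (fun r => Real.log (f r)) := sf.log fun r => (fpos r).ne'
  have sl' : ContDiff ℝ (⊤ : ℕ∞) (deriv fun r => Real.log (f r)) := by
    have := sl.iterate_deriv 1
    simpa using this
  have hbl : ∀ j, ∃ C, ∀ r, |iteratedDeriv j (deriv fun r => Real.log (f r)) r| ≤ C := by
    intro j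
    obtain ⟨C, hC⟩ := fb (j + 1) (by omega)
    refine ⟨C, fun r => ?_⟩
    rw [← iteratedDeriv_succ']
    exact hC r
  have hder : ∀ r, deriv (fun r => (f r)⁻¹) r = -((deriv fun r => Real.log (f r)) r * (f r)⁻¹) := by
    intro r
    have hd := (sf.differentiable (by simp) r).hasDerivAt
    have hi : HasDerivAt (fun r => (f r)⁻¹) _ r := hd.inv (fpos r).ne'
    rw [hi.deriv, (hd.log (fpos r).ne').deriv]
    have := (fpos r).ne'
    field_simp
  refine ⟨smooth_radial si, fun N => ?_⟩
  have bd : ∃ C : ℝ, ∀ x : Q d × Q d,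
      ‖(((f x.1.1)⁻¹ : ℝ) : ℂ)‖ ≤ C * f x.1.1 ^ (-1 : ℝ) * brF f x ^ (0 : ℝ) := by
    refine ⟨1, fun x => ?_⟩
    rw [Real.rpow_neg_one, Complex.norm_real, Real.norm_of_nonneg (inv_nonneg.2 (fpos _).le)]
    simp
  induction N with
  | zero => exact bd
  | succ N ih =>
    refine ⟨bd, fun j => ?_⟩
    rw [dirD_radial (si.differentiable (by simp))]
    cases j with
    | r =>
      simp only [Dir.vec, eR, Complex.ofReal_one, one_mul, hder]
      have h1 := (symN_radial (d := d) (f := f) N sl' hbl).mul f1 (smooth_radial sl')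
        (smooth_radial si) ih
      have h2 := (SymN.const (d := d) f N (-1)).mul f1 contDiff_const
        ((smooth_radial sl').mul (smooth_radial si)) h1
      have h3 := h2.cast (k' := -1 + (Dir.r : Dir d).dk) (m' := 0 + (Dir.r : Dir d).dm)
        (by simp [Dir.dk]) (by simp [Dir.dm])
      convert h3 using 2
      push_cast
      ring
    | th i => simp only [Dir.vec, eTh, Complex.ofReal_zero, zero_mul]; exact SymN.zero _ _ _ _
    | rho => simp only [Dir.vec, Prod.fst_zero, Complex.ofReal_zero, zero_mul]; exact SymN.zero _ _ _ _
    | eta i => simp only [Dir.vec, Prod.fst_zero, Complex.ofReal_zero, zero_mul]; exact SymN.zero _ _ _ _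

theorem sym_inv_pow {f : ℝ → ℝ} (hf : GoodF f) (n : ℕ) :
    FSym f (-n) 0 (fun x : Q d × Q d => (Complex.ofReal (f x.1.1 ^ n))⁻¹) := by
  induction n with
  | zero => simpa using FSym.const (d := d) f 1
  | succ n ih =>
    have := (ih.mul hf.2.1 (sym_inv hf)).cast (k' := -((n + 1 : ℕ) : ℝ)) (m' := 0)
      (by push_cast; ring) (by simp)
    convert this using 2
    push_cast
    rw [pow_succ, mul_inv]

theorem dirD_lin (L : (Q d × Q d) →L[ℝ] ℝ) (v : Q d × Q d) :
    dirD v (fun x => (L x : ℂ)) = fun _ => (L v : ℂ) := by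
  funext x
  unfold dirD
  have : HasFDerivAt (fun x => (L x : ℂ)) (Complex.ofRealCLM.comp L) x :=
    (Complex.ofRealCLM.comp L).hasFDerivAt
  rw [this.fderiv]
  simp

theorem smooth_lin (L : (Q d × Q d) →L[ℝ] ℝ) :
    ContDiff ℝ (⊤ : ℕ∞) (fun x => (L x : ℂ)) := (Complex.ofRealCLM.comp L).contDiff

theorem sym_lin {f : ℝ → ℝ} {k m : ℝ} (L : (Q d × Q d) →L[ℝ] ℝ)
    (hb : ∃ C : ℝ, ∀ x : Q d × Q d, ‖(L x : ℂ)‖ ≤ C * f x.1.1 ^ k * brF f x ^ m)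
    (hj : ∀ j : Dir d, L j.vec = 0 ∨ (k + j.dk = 0 ∧ m + j.dm = 0)) :
    FSym f k m (fun x => (L x : ℂ)) := by
  refine ⟨smooth_lin L, fun N => ?_⟩
  cases N with
  | zero => exact hb
  | succ N =>
    refine ⟨hb, fun j => ?_⟩
    rw [dirD_lin]
    rcases hj j with h | h
    · rw [h, Complex.ofReal_zero]; exact SymN.zero _ _ _ _
    · exact (SymN.const f N _).cast h.1.symm h.2.symm

def rhoL (d : ℕ) : (Q d × Q d) →L[ℝ] ℝ :=
  (ContinuousLinearMap.fst ℝ ℝ (Fin d → ℝ)).comp (ContinuousLinearMap.snd ℝ (Q d) (Q d))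

def etaL (d : ℕ) (i : Fin d) : (Q d × Q d) →L[ℝ] ℝ :=
  (ContinuousLinearMap.proj (R := ℝ) (φ := fun _ : Fin d => ℝ) i).comp
    ((ContinuousLinearMap.snd ℝ ℝ (Fin d → ℝ)).comp (ContinuousLinearMap.snd ℝ (Q d) (Q d)))

theorem sym_rho (f : ℝ → ℝ) : FSym f 0 1 (fun x : Q d × Q d => (x.2.1 : ℂ)) := by
  refine sym_lin (rhoL d) ⟨1, fun x => ?_⟩ ?_
  · simp only [rhoL, ContinuousLinearMap.comp_apply, ContinuousLinearMap.coe_fst',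
      ContinuousLinearMap.coe_snd', Real.rpow_zero, Real.rpow_one, one_mul, Complex.norm_real,
      Real.norm_eq_abs]
    apply Real.abs_le_sqrt
    have : 0 ≤ ∑ i, (x.2.2 i / f x.1.1) ^ 2 := Finset.sum_nonneg fun i _ => sq_nonneg _
    linarith
  · intro j
    cases j <;> simp [rhoL, Dir.vec, Dir.dk, Dir.dm, eTh]

theorem sym_eta {f : ℝ → ℝ} (hf : ∀ r, 1 ≤ f r) (i : Fin d) :
    FSym f 1 1 (fun x : Q d × Q d => (x.2.2 i : ℂ)) := by
  refine sym_lin (etaL d i) ⟨1, fun x => ?_⟩ ?_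
  · have h1 := zero_lt_one.trans_le (hf x.1.1)
    simp only [etaL, ContinuousLinearMap.comp_apply, ContinuousLinearMap.coe_fst',
      ContinuousLinearMap.coe_snd', Real.rpow_zero, Real.rpow_one, one_mul, Complex.norm_real,
      Real.norm_eq_abs, ContinuousLinearMap.proj_apply]
    rw [← div_le_iff₀' h1]
    rw [← abs_of_pos h1, ← abs_div]
    apply Real.abs_le_sqrt
    have : (x.2.2 i / f x.1.1) ^ 2 ≤ ∑ i, (x.2.2 i / f x.1.1) ^ 2 :=
      Finset.single_le_sum (f := fun i => (x.2.2 i / f x.1.1) ^ 2) (fun i _ => sq_nonneg _)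
        (Finset.mem_univ i)
    nlinarith [sq_nonneg x.2.1]
  · intro j
    cases j <;> simp [etaL, Dir.vec, Dir.dk, Dir.dm, eR]

theorem sym_rhoAdd {f : ℝ → ℝ} (hf : ∀ r, 1 ≤ f r) (ℏ : ℝ) {k m : ℝ} {a : Q d × Q d → ℂ}
    (ha : FSym f k m a) : FSym f k (m + 1) (rhoAdd d ℏ a) := by
  unfold rhoAdd
  refine FSym.add ?_ ?_
  · exact ((sym_rho f).mul hf ha).cast (by ring) (by ring)
  · exact (((FSym.const f _).mul hf (ha.deriv .r)).cast (k' := k) (m' := m)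
      (by simp [Dir.dk]) (by simp [Dir.dm])).mono hf (by linarith)

theorem sym_etaAdd {f : ℝ → ℝ} (hf : ∀ r, 1 ≤ f r) (ℏ : ℝ) (i : Fin d) {k m : ℝ}
    {a : Q d × Q d → ℂ}
    (ha : FSym f k m a) : FSym f (k + 1) (m + 1) (etaAdd d ℏ i a) := by
  unfold etaAdd
  refine FSym.add ?_ ?_
  · exact ((sym_eta hf i).mul hf ha).cast (by ring) (by ring)
  · exact (((FSym.const f _).mul hf (ha.deriv (.th i))).cast (k' := k + 1) (m' := m)
      (by simp [Dir.dk]) (by simp [Dir.dm])).mono hf (by linarith)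

theorem sym_rhoAdd_iter {f : ℝ → ℝ} (hf : ∀ r, 1 ≤ f r) (ℏ : ℝ) {k m : ℝ} {a : Q d × Q d → ℂ}
    (ha : FSym f k m a) (n : ℕ) : FSym f k (m + n) ((rhoAdd d ℏ)^[n] a) := by
  induction n with
  | zero => simpa using ha
  | succ n ih =>
    rw [Function.iterate_succ_apply']
    exact (sym_rhoAdd hf ℏ ih).cast rfl (by push_cast; ring)

theorem sym_etaAdd_iter {f : ℝ → ℝ} (hf : ∀ r, 1 ≤ f r) (ℏ : ℝ) (i : Fin d) {k m : ℝ}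
    {a : Q d × Q d → ℂ}
    (ha : FSym f k m a) (n : ℕ) : FSym f (k + n) (m + n) ((etaAdd d ℏ i)^[n] a) := by
  induction n with
  | zero => simpa using ha
  | succ n ih =>
    rw [Function.iterate_succ_apply']
    exact (sym_etaAdd hf ℏ i ih).cast (by push_cast; ring) (by push_cast; ring)

theorem sym_etaAdd_fold {f : ℝ → ℝ} (hf : ∀ r, 1 ≤ f r) (ℏ : ℝ) {k m : ℝ}
    {a : Q d × Q d → ℂ} (ha : FSym f k m a) (n : Fin d → ℕ) (l : List (Fin d)) :
    FSym f (k + ((l.map n).sum : ℕ)) (m + ((l.map n).sum : ℕ))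
      (l.foldr (fun i h => (etaAdd d ℏ i)^[n i] h) a) := by
  induction l with
  | nil => simpa using ha
  | cons i t ih =>
    simp only [List.foldr_cons, List.map_cons, List.sum_cons]
    exact (sym_etaAdd_iter hf ℏ i ih (n i)).cast (by push_cast; ring) (by push_cast; ring)

theorem FSym.sum {f : ℝ → ℝ} {k m : ℝ} {ι : Type*} (s : Finset ι) (a : ι → Q d × Q d → ℂ)
    (h : ∀ i ∈ s, FSym f k m (a i)) : FSym f k m (fun x => ∑ i ∈ s, a i x) := by
  classical
  induction s using Finset.induction_on with
  | empty => simpa using FSym.zero f k m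
  | insert i s hi ih =>
    simp only [Finset.sum_insert hi]
    exact (h i (Finset.mem_insert_self i s)).add
      (ih fun j hj => h j (Finset.mem_insert_of_mem hj))

theorem sym_core {f : ℝ → ℝ} (hf : ∀ r, 1 ≤ f r) (ℏ : ℝ) {m : ℝ}
    {a : Q d × Q d → ℂ} (ha : FSym f 0 m a) (α : MIdx d) :
    FSym f (degA α) (m + deg α) ((List.finRange d).foldr (fun i h => (etaAdd d ℏ i)^[α.2 i] h)
        ((rhoAdd d ℏ)^[α.1] a)) := by
  have h := sym_etaAdd_fold hf ℏ (sym_rhoAdd_iter hf ℏ ha α.1) α.2 (List.finRange d)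
  rw [← Fin.sum_univ_def] at h
  exact h.cast (by simp [degA]) (by simp [deg]; ring)

theorem sym_term {f : ℝ → ℝ} (hf : GoodF f) (ℏ : ℝ) {m : ℝ}
    {a : Q d × Q d → ℂ} (ha : FSym f 0 m a) (α : MIdx d) {p : Q d → ℂ}
    (hp : ContDiff ℝ (⊤ : ℕ∞) p)
    (hb : ∀ γ : MIdx d, ∃ C : ℝ, ∀ q : Q d, f q.1 ^ (-(degA γ : ℝ)) * ‖mderiv1 γ p q‖ ≤ C) :
    FSym f 0 (m + deg α) (fun x => p x.1 * (Complex.ofReal (f x.1.1 ^ degA α))⁻¹ *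
      ((List.finRange d).foldr (fun i h => (etaAdd d ℏ i)^[α.2 i] h)
        ((rhoAdd d ℏ)^[α.1] a)) x) :=
  (((sym_coef hf.2.1 hp hb).mul hf.2.1 (sym_inv_pow hf _)).mul hf.2.1
    (sym_core hf.2.1 ℏ ha α)).cast (by ring) (by ring)

theorem deg_le_of_mem {N : ℕ} {α : MIdx d} (h : α ∈ idxSet d N) : deg α ≤ N := by
  unfold idxSet at h
  exact (Finset.mem_filter.1 h).2

theorem sym_symbOfDiff {f : ℝ → ℝ} (hf : GoodF f) (m₁ : ℕ) (m₂ : ℝ) (ℏ : ℝ)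
    (pc : MIdx d → Q d → ℂ)
    (hpc : ∀ α : MIdx d, ContDiff ℝ (⊤ : ℕ∞) (pc α) ∧
      ∀ γ : MIdx d, ∃ C : ℝ, ∀ q : Q d,
        f q.1 ^ (-(degA γ : ℝ)) * ‖mderiv1 γ (pc α) q‖ ≤ C)
    (a : Q d × Q d → ℂ) (ha : FSym f 0 m₂ a) :
    FSym f 0 ((m₁ : ℝ) + m₂) (symbOfDiff d f ℏ m₁ pc a) := by
  unfold symbOfDiff
  refine FSym.sum _ _ fun α hα => (sym_term hf ℏ ha α (hpc α).1 (hpc α).2).mono hf.2.1 ?_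
  have : (deg α : ℝ) ≤ m₁ := by exact_mod_cast deg_le_of_mem hα
  linarith

instance instHaarQ : (volume : Measure (Q d)).IsAddHaarMeasure := by
  change ((volume : Measure ℝ).prod (volume : Measure (Fin d → ℝ))).IsAddHaarMeasure
  infer_instance

/-- The semiclassical Fourier transform of `u`. -/
def uhat (ℏ : ℝ) (u : Q d → ℂ) (p : Q d) : ℂ := ∫ q' : Q d, ephase ℏ p (-q') * u q'

theorem qdot_sub (p q q' : Q d) : qdot p (q - q') = qdot p q + qdot p (-q') := by
  simp only [qdot, Prod.fst_sub, Prod.snd_sub, Prod.fst_neg, Prod.snd_neg, Pi.sub_apply,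
    Pi.neg_apply, mul_sub, mul_neg, Finset.sum_sub_distrib, Finset.sum_neg_distrib]
  ring

theorem ephase_sub (ℏ : ℝ) (p q q' : Q d) :
    ephase ℏ p (q - q') = ephase ℏ p q * ephase ℏ p (-q') := by
  unfold ephase
  rw [← Complex.exp_add, qdot_sub]
  congr 1
  push_cast
  ring

theorem norm_ephase (ℏ : ℝ) (p q : Q d) : ‖ephase ℏ p q‖ = 1 := by
  unfold ephase
  rw [show Complex.I * Complex.ofReal (qdot p q) / Complex.ofReal ℏ =
    ((qdot p q / ℏ : ℝ) : ℂ) * Complex.I by push_cast; ring]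
  exact Complex.norm_exp_ofReal_mul_I _

theorem Op_eq (ℏ : ℝ) (a : Q d × Q d → ℂ) (u : Q d → ℂ) (q : Q d) :
    Op ℏ 1 a u q = ((2 * Real.pi * ℏ) ^ (d + 1) : ℝ)⁻¹ •
      ∫ p : Q d, a (q, p) * ephase ℏ p q * uhat ℏ u p := by
  unfold Op uhat
  congr 1
  congr 1
  funext p
  rw [← integral_const_mul]
  congr 1
  funext q'
  rw [ephase_sub]
  simp only [one_smul, sub_self, zero_smul, add_zero]
  ring

theorem smooth_ephase (ℏ : ℝ) :
    ContDiff ℝ (⊤ : ℕ∞) (fun x : Q d × Q d => ephase ℏ x.2 x.1) := by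
  have h : ContDiff ℝ (⊤ : ℕ∞) (fun x : Q d × Q d => qdot x.2 x.1) := by
    unfold qdot
    fun_prop
  unfold ephase
  exact ((contDiff_const.mul (Complex.ofRealCLM.contDiff.comp h)).div_const _).cexp

theorem smooth_ephase_neg (ℏ : ℝ) :
    ContDiff ℝ (⊤ : ℕ∞) (fun x : Q d × Q d => ephase ℏ x.1 (-x.2)) :=
  (smooth_ephase ℏ).comp (contDiff_snd.neg.prodMk contDiff_fst)

def qdotL (p : Q d) : Q d →L[ℝ] ℝ :=
  p.1 • ContinuousLinearMap.fst ℝ ℝ (Fin d → ℝ) +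
    ∑ i, p.2 i • (ContinuousLinearMap.proj (R := ℝ) (φ := fun _ : Fin d => ℝ) i).comp
      (ContinuousLinearMap.snd ℝ ℝ (Fin d → ℝ))

theorem qdotL_apply (p q : Q d) : qdotL p q = qdot p q := by
  simp [qdotL, qdot, ContinuousLinearMap.sum_apply]

theorem hasFDerivAt_ephase (ℏ : ℝ) (p q : Q d) :
    HasFDerivAt (fun q => ephase ℏ p q)
      (ephase ℏ p q • ((Complex.I / ℏ) • Complex.ofRealCLM.comp (qdotL p))) q := by
  have h1 : HasFDerivAt (fun q : Q d => (qdot p q : ℂ)) (Complex.ofRealCLM.comp (qdotL p)) q := by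
    have := (Complex.ofRealCLM.comp (qdotL p)).hasFDerivAt (x := q)
    have e : (fun q : Q d => (qdot p q : ℂ)) = ⇑(Complex.ofRealCLM.comp (qdotL p)) := by
      funext q; simp [qdotL_apply]
    rw [e]; exact this
  have h2 := (h1.const_mul (Complex.I / ℏ)).cexp
  have e : ∀ q, ephase ℏ p q = Complex.exp (Complex.I / ℏ * (qdot p q : ℂ)) := by
    intro q; unfold ephase; congr 1; ring
  simp only [e]
  exact h2

theorem dirD_ephase (ℏ : ℝ) (p w : Q d) :
    dirD w (fun q => ephase ℏ p q) = fun q => Complex.I / ℏ * qdot p w * ephase ℏ p q := by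
  funext q
  unfold dirD
  rw [(hasFDerivAt_ephase ℏ p q).fderiv]
  simp [qdotL_apply]
  ring

theorem dirD_ephase_neg (ℏ : ℝ) (p w : Q d) :
    dirD w (fun q => ephase ℏ p (-q)) =
      fun q => -(Complex.I / ℏ * qdot p w * ephase ℏ p (-q)) := by
  funext q
  unfold dirD
  have h := (hasFDerivAt_ephase ℏ p (-q)).comp q (hasFDerivAt_id q).neg
  have h' : HasFDerivAt (fun q => ephase ℏ p (-q)) _ q := h
  rw [h'.fderiv]
  simp [qdotL_apply]
  ring

theorem IsCc.deriv {u : Q d → ℂ} (hu : IsCc u) (w : Q d) : IsCc (dirD w u) :=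
  ⟨sm_dirD w hu.1, hu.2.fderiv_apply ℝ w⟩

theorem smooth_en (ℏ : ℝ) (p : Q d) : ContDiff ℝ (⊤ : ℕ∞) (fun q => ephase ℏ p (-q)) :=
  (smooth_ephase_neg ℏ).comp (contDiff_const.prodMk contDiff_id)

theorem integ_cc {u v : Q d → ℂ} (hv : Continuous v) (hu : IsCc u) :
    Integrable (fun q => v q * u q) :=
  (hv.mul hu.1.continuous).integrable_of_hasCompactSupport hu.2.mul_left

theorem uhat_deriv {ℏ : ℝ} (hℏ : 0 < ℏ) {u : Q d → ℂ} (hu : IsCc u) (w p : Q d) :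
    |qdot p w| * ‖uhat ℏ u p‖ = ℏ * ‖uhat ℏ (dirD w u) p‖ := by
  have hs := smooth_en ℏ p
  have key : ∫ q, ephase ℏ p (-q) * dirD w u q = - ∫ q, dirD w (fun q => ephase ℏ p (-q)) q * u q :=
    integral_mul_fderiv_eq_neg_fderiv_mul_of_integrable
      (integ_cc (sm_dirD w hs).continuous hu) (integ_cc hs.continuous (hu.deriv w))
      (integ_cc hs.continuous hu) (fun x _ => sm_diff hs x) (fun x _ => sm_diff hu.1 x)
  have e : uhat ℏ (dirD w u) p = Complex.I / ℏ * qdot p w * uhat ℏ u p := by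
    unfold uhat
    rw [key, dirD_ephase_neg, ← integral_const_mul, ← integral_neg]
    congr 1
    funext q
    ring
  rw [e]
  simp only [norm_mul, norm_div, Complex.norm_I, Complex.norm_real, Real.norm_eq_abs,
    abs_of_pos hℏ]
  field_simp

theorem qdot_eR (p : Q d) : qdot p (eR d) = p.1 := by simp [qdot, eR]
theorem qdot_eTh (p : Q d) (i : Fin d) : qdot p (eTh d i) = p.2 i := by
  simp [qdot, eTh, Pi.single_apply]

theorem norm_le_sum (p : Q d) : ‖p‖ ≤ |p.1| + ∑ i, |p.2 i| := by
  have h0 : 0 ≤ ∑ i, |p.2 i| := Finset.sum_nonneg fun i _ => abs_nonneg _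
  rw [Prod.norm_def]
  refine max_le ?_ ?_
  · rw [Real.norm_eq_abs]; linarith
  · have : ‖p.2‖ ≤ ∑ i, |p.2 i| := by
      rw [pi_norm_le_iff_of_nonneg h0]
      intro i
      exact Finset.single_le_sum (f := fun i => |p.2 i|) (fun i _ => abs_nonneg _) (Finset.mem_univ i)
    linarith [abs_nonneg p.1]

theorem uhat_decay {ℏ : ℝ} (hℏ : 0 < ℏ) (N : ℕ) {u : Q d → ℂ} (hu : IsCc u) :
    ∃ C : ℝ, ∀ p : Q d, (1 + ‖p‖) ^ N * ‖uhat ℏ u p‖ ≤ C := by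
  induction N generalizing u with
  | zero =>
    refine ⟨∫ q, ‖u q‖, fun p => ?_⟩
    rw [pow_zero, one_mul]
    refine (norm_integral_le_integral_norm _).trans (le_of_eq ?_)
    congr 1
    funext q
    rw [norm_mul, norm_ephase, one_mul]
  | succ N ih =>
    obtain ⟨C0, h0⟩ := ih hu
    obtain ⟨C1, h1⟩ := ih (hu.deriv (eR d))
    choose C2 h2 using fun i => ih (hu.deriv (eTh d i))
    refine ⟨C0 + ℏ * C1 + ∑ i, ℏ * C2 i, fun p => ?_⟩
    have e1 := uhat_deriv hℏ hu (eR d) p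
    have e2 := fun i => uhat_deriv hℏ hu (eTh d i) p
    rw [qdot_eR] at e1
    simp only [qdot_eTh] at e2
    have hn := norm_le_sum p
    calc (1 + ‖p‖) ^ (N + 1) * ‖uhat ℏ u p‖
        = (1 + ‖p‖) ^ N * ‖uhat ℏ u p‖ * (1 + ‖p‖) := by ring
      _ ≤ (1 + ‖p‖) ^ N * ‖uhat ℏ u p‖ * (1 + (|p.1| + ∑ i, |p.2 i|)) := by gcongr
      _ = (1 + ‖p‖) ^ N * ‖uhat ℏ u p‖ + (1 + ‖p‖) ^ N * (|p.1| * ‖uhat ℏ u p‖) +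
          ∑ i, (1 + ‖p‖) ^ N * (|p.2 i| * ‖uhat ℏ u p‖) := by
          rw [← Finset.mul_sum, ← Finset.sum_mul]; ring
      _ = (1 + ‖p‖) ^ N * ‖uhat ℏ u p‖ + ℏ * ((1 + ‖p‖) ^ N * ‖uhat ℏ (dirD (eR d) u) p‖) +
          ∑ i, ℏ * ((1 + ‖p‖) ^ N * ‖uhat ℏ (dirD (eTh d i) u) p‖) := by
          rw [e1]; simp only [e2]
          congr 1
          · ring
          · refine Finset.sum_congr rfl fun i _ => by ring
      _ ≤ _ := by
          gcongr
          · exact h0 p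
          · exact h1 p
          · exact h2 _ p

theorem uhat_decay' {ℏ : ℝ} (hℏ : 0 < ℏ) (M : ℕ) {u : Q d → ℂ} (hu : IsCc u) :
    ∃ C : ℝ, ∀ p : Q d, (1 + ‖p‖) ^ M * ‖uhat ℏ u p‖ ≤ C * (1 + ‖p‖) ^ (-((d : ℝ) + 2)) := by
  obtain ⟨C, hC⟩ := uhat_decay hℏ (M + (d + 2)) hu
  refine ⟨C, fun p => ?_⟩
  have h1 : 0 < 1 + ‖p‖ := by positivity
  rw [Real.rpow_neg h1.le, ← div_eq_mul_inv, le_div_iff₀ (by positivity)]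
  have : (1 + ‖p‖) ^ ((d : ℝ) + 2) = (1 + ‖p‖) ^ (d + 2) := by
    rw [← Real.rpow_natCast]; push_cast; rfl
  rw [this]
  refine le_trans (le_of_eq ?_) (hC p)
  ring

theorem integ_weight : Integrable (fun p : Q d => (1 + ‖p‖) ^ (-((d : ℝ) + 2))) := by
  apply integrable_one_add_norm
  rw [Module.finrank_prod]
  simp
  linarith

theorem measurable_uhat (ℏ : ℝ) {u : Q d → ℂ} (hu : IsCc u) :
    AEStronglyMeasurable (uhat ℏ u) (volume : Measure (Q d)) := by
  have : Continuous (fun x : Q d × Q d => ephase ℏ x.1 (-x.2) * u x.2) :=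
    (smooth_ephase_neg ℏ).continuous.mul (hu.1.continuous.comp continuous_snd)
  exact (this.stronglyMeasurable.integral_prod_right (ν := (volume : Measure (Q d)))).aestronglyMeasurable

theorem brF_le {f : ℝ → ℝ} (hf : ∀ r, 1 ≤ f r) (x : Q d × Q d) :
    brF f x ≤ (d + 1) * (1 + ‖x.2‖) := by
  unfold brF
  apply Real.sqrt_le_iff.2 ⟨by positivity, ?_⟩
  have h1 : x.2.1 ^ 2 ≤ ‖x.2‖ ^ 2 := by
    rw [← sq_abs]
    have : |x.2.1| ≤ ‖x.2‖ := norm_fst_le x.2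
    gcongr
  have h2 : ∀ i, (x.2.2 i / f x.1.1) ^ 2 ≤ ‖x.2‖ ^ 2 := by
    intro i
    rw [← sq_abs, abs_div]
    have h3 : |x.2.2 i| ≤ ‖x.2‖ := (norm_le_pi_norm x.2.2 i).trans (norm_snd_le x.2)
    have h4 : 1 ≤ |f x.1.1| := (hf _).trans (le_abs_self _)
    have : |x.2.2 i| / |f x.1.1| ≤ ‖x.2‖ := (div_le_self (abs_nonneg _) h4).trans h3
    gcongr
  have h3 : ∑ i, (x.2.2 i / f x.1.1) ^ 2 ≤ d * ‖x.2‖ ^ 2 := by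
    refine (Finset.sum_le_sum fun i _ => h2 i).trans ?_
    simp
  have h4 : (0 : ℝ) ≤ d := by positivity
  have h5 := norm_nonneg x.2
  have : ((d : ℝ) + 1) * (1 + ‖x.2‖) ^ 2 ≤ ((d : ℝ) + 1) ^ 2 * (1 + ‖x.2‖) ^ 2 := by
    gcongr; nlinarith
  nlinarith [mul_nonneg h4 h5]

theorem FSym.poly {f : ℝ → ℝ} (hf : GoodF f) {k m : ℝ} {a : Q d × Q d → ℂ} (ha : FSym f k m a)
    (q₀ : Q d) : ∃ (C : ℝ) (M : ℕ), ∀ q ∈ Metric.ball q₀ 1, ∀ p,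
      ‖a (q, p)‖ ≤ C * (1 + ‖p‖) ^ M := by
  obtain ⟨C, hC0, hC⟩ := (ha.2 0).bound' hf.2.1
  have fpos : ∀ r, 0 < f r := fun r => zero_lt_one.trans_le (hf.2.1 r)
  have hc : Continuous (fun q : Q d => f q.1 ^ k) :=
    (hf.1.continuous.comp continuous_fst).rpow_const fun q => Or.inl (fpos _).ne'
  obtain ⟨K, hK⟩ := (isCompact_closedBall q₀ 1).exists_bound_of_continuousOn hc.continuousOn
  refine ⟨C * |K| * (d + 1) ^ ⌈|m|⌉₊, ⌈|m|⌉₊, fun q hq p => (hC (q, p)).trans ?_⟩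
  have h1 : f q.1 ^ k ≤ |K| :=
    (le_abs_self _).trans ((hK q (Metric.ball_subset_closedBall hq)).trans (le_abs_self _))
  have h2 : brF f (q, p) ^ m ≤ ((d + 1) * (1 + ‖p‖)) ^ ⌈|m|⌉₊ := by
    calc brF f (q, p) ^ m ≤ brF f (q, p) ^ ((⌈|m|⌉₊ : ℕ) : ℝ) :=
          Real.rpow_le_rpow_of_exponent_le (brF_ge f _) ((le_abs_self m).trans (Nat.le_ceil _))
      _ = brF f (q, p) ^ ⌈|m|⌉₊ := Real.rpow_natCast _ _
      _ ≤ _ := by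
          have := brF_le hf.2.1 (q, p)
          have := zero_le_one.trans (brF_ge f (q, p))
          gcongr
  have h3 := zero_le_one.trans (brF_ge f (q, p))
  calc C * f q.1 ^ k * brF f (q, p) ^ m ≤ C * |K| * ((d + 1) * (1 + ‖p‖)) ^ ⌈|m|⌉₊ := by gcongr
    _ = _ := by rw [mul_pow]; ring

theorem FSym.dom {f : ℝ → ℝ} (hf : GoodF f) {ℏ : ℝ} (hℏ : 0 < ℏ) {u : Q d → ℂ} (hu : IsCc u)
    {k m : ℝ} {a : Q d × Q d → ℂ} (ha : FSym f k m a)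
    (q₀ : Q d) : ∃ C : ℝ, ∀ q ∈ Metric.ball q₀ 1, ∀ p,
      ‖a (q, p)‖ * ‖uhat ℏ u p‖ ≤ C * (1 + ‖p‖) ^ (-((d : ℝ) + 2)) := by
  obtain ⟨C, M, hC⟩ := ha.poly hf q₀
  obtain ⟨D, hD⟩ := uhat_decay' hℏ M hu
  refine ⟨|C| * D, fun q hq p => ?_⟩
  calc ‖a (q, p)‖ * ‖uhat ℏ u p‖ ≤ (|C| * (1 + ‖p‖) ^ M) * ‖uhat ℏ u p‖ := by
        gcongr
        refine (hC q hq p).trans ?_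
        gcongr
        exact le_abs_self C
    _ = |C| * ((1 + ‖p‖) ^ M * ‖uhat ℏ u p‖) := by ring
    _ ≤ |C| * (D * (1 + ‖p‖) ^ (-((d : ℝ) + 2))) := mul_le_mul_of_nonneg_left (hD p) (abs_nonneg _)
    _ = _ := by ring

theorem FSym.integrable {f : ℝ → ℝ} (hf : GoodF f) {ℏ : ℝ} (hℏ : 0 < ℏ) {u : Q d → ℂ}
    (hu : IsCc u) {k m : ℝ} {a : Q d × Q d → ℂ} (ha : FSym f k m a) (q : Q d) :
    Integrable (fun p => a (q, p) * ephase ℏ p q * uhat ℏ u p) := by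
  obtain ⟨C, hC⟩ := ha.dom hf hℏ hu q
  refine (integ_weight.const_mul C).mono' ?_ (Filter.Eventually.of_forall fun p => ?_)
  · have : Continuous (fun p => a (q, p) * ephase ℏ p q) :=
      (ha.1.continuous.comp (by fun_prop : Continuous fun p : Q d => (q, p))).mul
        ((smooth_ephase ℏ).continuous.comp (by fun_prop : Continuous fun p : Q d => (q, p)))
    exact this.aestronglyMeasurable.mul (measurable_uhat ℏ hu)
  · rw [norm_mul, norm_mul, norm_ephase, mul_one]
    exact hC q (Metric.mem_ball_self one_pos) p

theorem clm_norm_le (L : Q d →L[ℝ] ℂ) : ‖L‖ ≤ ‖L (eR d)‖ + ∑ i, ‖L (eTh d i)‖ := by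
  have h0 : 0 ≤ ∑ i, ‖L (eTh d i)‖ := Finset.sum_nonneg fun i _ => norm_nonneg _
  refine ContinuousLinearMap.opNorm_le_bound _ (by positivity) fun v => ?_
  have hv : v = v.1 • eR d + ∑ i, v.2 i • eTh d i := by
    ext j
    · simp [eR, eTh, Prod.fst_sum]
    · simp [eR, eTh, Prod.snd_sum, Finset.sum_apply, Pi.single_apply]
  have e : L v = v.1 • L (eR d) + ∑ i, v.2 i • L (eTh d i) := by
    conv_lhs => rw [hv]
    simp
  rw [e]
  refine (norm_add_le _ _).trans ?_
  rw [add_mul, Finset.sum_mul]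
  refine add_le_add ?_ ((norm_sum_le _ _).trans (Finset.sum_le_sum fun i _ => ?_))
  · rw [norm_smul, mul_comm]
    exact mul_le_mul_of_nonneg_left (norm_fst_le v) (norm_nonneg _)
  · rw [norm_smul, mul_comm]
    exact mul_le_mul_of_nonneg_left ((norm_le_pi_norm v.2 i).trans (norm_snd_le v)) (norm_nonneg _)

/-- `a(q,p) e^{ip·q/ℏ}`. -/
def GG (ℏ : ℝ) (a : Q d × Q d → ℂ) : Q d × Q d → ℂ := fun x => a x * ephase ℏ x.2 x.1

theorem smooth_GG (ℏ : ℝ) {a : Q d × Q d → ℂ} (ha : ContDiff ℝ (⊤ : ℕ∞) a) :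
    ContDiff ℝ (⊤ : ℕ∞) (GG ℏ a) := ha.mul (smooth_ephase ℏ)

theorem dirD_joint_ephase (ℏ : ℝ) (w : Q d) :
    dirD ((w, 0) : Q d × Q d) (fun x : Q d × Q d => ephase ℏ x.2 x.1) =
      fun x => Complex.I / ℏ * qdot x.2 w * ephase ℏ x.2 x.1 := by
  funext x
  have h1 := (sm_diff (smooth_ephase (d := d) ℏ) x).hasFDerivAt
  have h2 : HasFDerivAt (fun q : Q d => (q, x.2)) (ContinuousLinearMap.inl ℝ (Q d) (Q d)) x.1 :=
    hasFDerivAt_prodMk_left x.1 x.2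
  have h3' := HasFDerivAt.comp (g := fun x : Q d × Q d => ephase ℏ x.2 x.1) x.1 h1 h2
  have h3 : HasFDerivAt (fun q : Q d => ephase ℏ x.2 q) _ x.1 := h3'
  have h4 := congrFun (dirD_ephase ℏ x.2 w) x.1
  rw [← h4]
  unfold dirD
  rw [h3.fderiv]
  simp

theorem dirD_GG {ℏ : ℝ} (hℏ : 0 < ℏ) {a : Q d × Q d → ℂ} (ha : ContDiff ℝ (⊤ : ℕ∞) a) (w : Q d)
    (x : Q d × Q d) :
    (ℏ : ℂ) * (-Complex.I) * dirD ((w, 0) : Q d × Q d) (GG ℏ a) x =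
      ((qdot x.2 w : ℂ) * a x + (ℏ : ℂ) * (-Complex.I) * dirD ((w, 0) : Q d × Q d) a x) *
        ephase ℏ x.2 x.1 := by
  unfold GG
  rw [dirD_mul _ (sm_diff ha) (sm_diff (smooth_ephase ℏ)), dirD_joint_ephase]
  have : (ℏ : ℂ) ≠ 0 := by exact_mod_cast hℏ.ne'
  field_simp
  ring_nf
  simp only [Complex.I_sq]
  ring

theorem dirD_GG_r {ℏ : ℝ} (hℏ : 0 < ℏ) {a : Q d × Q d → ℂ} (ha : ContDiff ℝ (⊤ : ℕ∞) a)
    (x : Q d × Q d) :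
    (ℏ : ℂ) * (-Complex.I) * dirD ((eR d, 0) : Q d × Q d) (GG ℏ a) x = GG ℏ (rhoAdd d ℏ a) x := by
  rw [dirD_GG hℏ ha, qdot_eR]; rfl

theorem dirD_GG_th {ℏ : ℝ} (hℏ : 0 < ℏ) {a : Q d × Q d → ℂ} (ha : ContDiff ℝ (⊤ : ℕ∞) a)
    (i : Fin d) (x : Q d × Q d) :
    (ℏ : ℂ) * (-Complex.I) * dirD ((eTh d i, 0) : Q d × Q d) (GG ℏ a) x =
      GG ℏ (etaAdd d ℏ i a) x := by
  rw [dirD_GG hℏ ha, qdot_eTh]; rfl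

theorem norm_GG (ℏ : ℝ) (a : Q d × Q d → ℂ) (x : Q d × Q d) : ‖GG ℏ a x‖ = ‖a x‖ := by
  unfold GG; rw [norm_mul, norm_ephase, mul_one]

theorem norm_of_hD {ℏ : ℝ} (hℏ : 0 < ℏ) {z w : ℂ} (h : (ℏ : ℂ) * (-Complex.I) * z = w) :
    ‖z‖ = ℏ⁻¹ * ‖w‖ := by
  rw [← h]
  simp only [norm_mul, norm_neg, Complex.norm_I, Complex.norm_real, Real.norm_eq_abs,
    abs_of_pos hℏ]
  field_simp

def JJ (ℏ : ℝ) (u : Q d → ℂ) (a : Q d × Q d → ℂ) (q : Q d) : ℂ :=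
  ∫ p : Q d, GG ℏ a (q, p) * uhat ℏ u p

theorem hasFDerivAt_JJ {f : ℝ → ℝ} (hf : GoodF f) {ℏ : ℝ} (hℏ : 0 < ℏ) {u : Q d → ℂ}
    (hu : IsCc u) {k m : ℝ} {a : Q d × Q d → ℂ} (ha : FSym f k m a) (q : Q d) :
    DifferentiableAt ℝ (JJ ℏ u a) q ∧ ∀ w : Q d, dirD w (JJ ℏ u a) q =
      ∫ p : Q d, dirD ((w, 0) : Q d × Q d) (GG ℏ a) (q, p) * uhat ℏ u p := by
  obtain ⟨C1, h1⟩ := (sym_rhoAdd hf.2.1 ℏ ha).dom hf hℏ hu q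
  choose C2 h2 using fun i => (sym_etaAdd hf.2.1 ℏ i ha).dom hf hℏ hu q
  let F' : Q d → Q d → (Q d →L[ℝ] ℂ) := fun q p =>
    uhat ℏ u p • (fderiv ℝ (GG ℏ a) (q, p)).comp (ContinuousLinearMap.inl ℝ (Q d) (Q d))
  have sG := smooth_GG ℏ ha.1
  have bd : ∀ p, ∀ q' ∈ Metric.ball q 1,
      ‖F' q' p‖ ≤ (ℏ⁻¹ * C1 + ∑ i, ℏ⁻¹ * C2 i) * (1 + ‖p‖) ^ (-((d : ℝ) + 2)) := by
    intro p q' hq'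
    have e1 : ‖dirD ((eR d, 0) : Q d × Q d) (GG ℏ a) (q', p)‖ = _ :=
      norm_of_hD hℏ (dirD_GG_r hℏ ha.1 (q', p))
    have e2 : ∀ i, ‖dirD ((eTh d i, 0) : Q d × Q d) (GG ℏ a) (q', p)‖ = _ :=
      fun i => norm_of_hD hℏ (dirD_GG_th hℏ ha.1 i (q', p))
    simp only [norm_GG] at e1 e2
    have hL := clm_norm_le ((fderiv ℝ (GG ℏ a) (q', p)).comp (ContinuousLinearMap.inl ℝ (Q d) (Q d)))
    have hL' : ‖(fderiv ℝ (GG ℏ a) (q', p)).comp (ContinuousLinearMap.inl ℝ (Q d) (Q d))‖ ≤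
      ‖dirD ((eR d, 0) : Q d × Q d) (GG ℏ a) (q', p)‖ +
        ∑ i, ‖dirD ((eTh d i, 0) : Q d × Q d) (GG ℏ a) (q', p)‖ := hL
    rw [e1] at hL'
    simp only [e2] at hL'
    have hi : 0 ≤ ℏ⁻¹ := by positivity
    calc ‖F' q' p‖ = ‖(fderiv ℝ (GG ℏ a) (q', p)).comp
          (ContinuousLinearMap.inl ℝ (Q d) (Q d))‖ * ‖uhat ℏ u p‖ := by
          simp only [F']; rw [norm_smul, mul_comm]
      _ ≤ (ℏ⁻¹ * ‖rhoAdd d ℏ a (q', p)‖ + ∑ i, ℏ⁻¹ * ‖etaAdd d ℏ i a (q', p)‖) * ‖uhat ℏ u p‖ :=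
          mul_le_mul_of_nonneg_right hL' (norm_nonneg _)
      _ = ℏ⁻¹ * (‖rhoAdd d ℏ a (q', p)‖ * ‖uhat ℏ u p‖) +
          ∑ i, ℏ⁻¹ * (‖etaAdd d ℏ i a (q', p)‖ * ‖uhat ℏ u p‖) := by
          rw [add_mul, Finset.sum_mul]; simp only [mul_assoc]
      _ ≤ ℏ⁻¹ * (C1 * (1 + ‖p‖) ^ (-((d : ℝ) + 2))) +
          ∑ i, ℏ⁻¹ * (C2 i * (1 + ‖p‖) ^ (-((d : ℝ) + 2))) :=
          add_le_add (mul_le_mul_of_nonneg_left (h1 q' hq' p) hi)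
            (Finset.sum_le_sum fun i _ => mul_le_mul_of_nonneg_left (h2 i q' hq' p) hi)
      _ = _ := by rw [add_mul, Finset.sum_mul]; simp only [mul_assoc]
  have mF' : AEStronglyMeasurable (F' q) (volume : Measure (Q d)) := by
    refine (measurable_uhat ℏ hu).smul ?_
    have hc : Continuous (fun p : Q d => fderiv ℝ (GG ℏ a) (q, p)) :=
      (sG.continuous_fderiv (by simp)).comp (by fun_prop : Continuous fun p : Q d => (q, p))
    exact (hc.clm_comp continuous_const).aestronglyMeasurable
  have hint := fun q => ha.integrable hf hℏ hu q
  have hw := (integ_weight (d := d)).const_mul (ℏ⁻¹ * C1 + ∑ i, ℏ⁻¹ * C2 i)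
  have main : HasFDerivAt (JJ ℏ u a) (∫ p, F' q p) q := by
    refine hasFDerivAt_integral_of_dominated_of_fderiv_le (μ := (volume : Measure (Q d)))
      (F := fun q p => GG ℏ a (q, p) * uhat ℏ u p) (F' := F')
      (Metric.ball_mem_nhds q one_pos)
      (Filter.Eventually.of_forall fun q => (hint q).aestronglyMeasurable) (hint q) mF'
      (Filter.Eventually.of_forall bd) hw (Filter.Eventually.of_forall fun p q' _ => ?_)
    have g1 := (sm_diff sG (q', p)).hasFDerivAt
    have g2 : HasFDerivAt (fun q : Q d => (q, p)) (ContinuousLinearMap.inl ℝ (Q d) (Q d)) q' :=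
      hasFDerivAt_prodMk_left q' p
    have g3' := HasFDerivAt.comp (g := GG ℏ a) q' g1 g2
    have g3 : HasFDerivAt (fun q : Q d => GG ℏ a (q, p)) _ q' := g3'
    exact g3.mul_const (uhat ℏ u p)
  refine ⟨main.differentiableAt, fun w => ?_⟩
  have iF' : Integrable (F' q) (volume : Measure (Q d)) :=
    hw.mono' mF' (Filter.Eventually.of_forall fun p => bd p q (Metric.mem_ball_self one_pos))
  change fderiv ℝ (JJ ℏ u a) q w = _
  rw [main.fderiv, ContinuousLinearMap.integral_apply iF']
  congr 1
  funext p
  simp [F', dirD, mul_comm]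

theorem Op_JJ (ℏ : ℝ) (a : Q d × Q d → ℂ) (u : Q d → ℂ) :
    Op ℏ 1 a u = fun q => ((((2 * Real.pi * ℏ) ^ (d + 1) : ℝ)⁻¹ : ℝ) : ℂ) * JJ ℏ u a q := by
  funext q
  rw [Op_eq, ← Complex.real_smul]
  rfl

theorem JJ_diff {f : ℝ → ℝ} (hf : GoodF f) {ℏ : ℝ} (hℏ : 0 < ℏ) {u : Q d → ℂ}
    (hu : IsCc u) {k m : ℝ} {a : Q d × Q d → ℂ} (ha : FSym f k m a) :
    Differentiable ℝ (JJ ℏ u a) := fun q => (hasFDerivAt_JJ hf hℏ hu ha q).1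

theorem JJ_r {f : ℝ → ℝ} (hf : GoodF f) {ℏ : ℝ} (hℏ : 0 < ℏ) {u : Q d → ℂ}
    (hu : IsCc u) {k m : ℝ} {a : Q d × Q d → ℂ} (ha : FSym f k m a) (q : Q d) :
    (ℏ : ℂ) * (-Complex.I) * dirD (eR d) (JJ ℏ u a) q = JJ ℏ u (rhoAdd d ℏ a) q := by
  rw [(hasFDerivAt_JJ hf hℏ hu ha q).2, ← integral_const_mul]
  unfold JJ
  congr 1
  funext p
  rw [← dirD_GG_r hℏ ha.1]
  ring

theorem JJ_th {f : ℝ → ℝ} (hf : GoodF f) {ℏ : ℝ} (hℏ : 0 < ℏ) {u : Q d → ℂ}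
    (hu : IsCc u) {k m : ℝ} {a : Q d × Q d → ℂ} (ha : FSym f k m a) (i : Fin d) (q : Q d) :
    (ℏ : ℂ) * (-Complex.I) * dirD (eTh d i) (JJ ℏ u a) q = JJ ℏ u (etaAdd d ℏ i a) q := by
  rw [(hasFDerivAt_JJ hf hℏ hu ha q).2, ← integral_const_mul]
  unfold JJ
  congr 1
  funext p
  rw [← dirD_GG_th hℏ ha.1]
  ring

theorem dirD_const_mul {E : Type*} [NormedAddCommGroup E] [NormedSpace ℝ E] (v : E) (c : ℂ)
    {h : E → ℂ} (hh : Differentiable ℝ h) :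
    dirD v (fun x => c * h x) = fun x => c * dirD v h x := by
  rw [dirD_mul v (differentiable_const c) hh, dirD_zero']
  simp

theorem hbarDr_iter {f : ℝ → ℝ} (hf : GoodF f) {ℏ : ℝ} (hℏ : 0 < ℏ) {u : Q d → ℂ}
    (hu : IsCc u) {k m : ℝ} {a : Q d × Q d → ℂ} (ha : FSym f k m a) (c : ℂ) (n : ℕ) :
    (hbarDr d ℏ)^[n] (fun q => c * JJ ℏ u a q) =
      fun q => c * JJ ℏ u ((rhoAdd d ℏ)^[n] a) q := by
  induction n with
  | zero => rfl
  | succ n ih =>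
    rw [Function.iterate_succ_apply', ih, Function.iterate_succ_apply']
    have hs := sym_rhoAdd_iter hf.2.1 ℏ ha n
    funext q
    unfold hbarDr
    rw [dirD_const_mul _ _ (JJ_diff hf hℏ hu hs), ← JJ_r hf hℏ hu hs]
    ring

theorem dirD_th_radial {f : ℝ → ℝ} (hf : GoodF f) (K : ℕ) (i : Fin d) :
    Differentiable ℝ (fun q : Q d => (Complex.ofReal (f q.1 ^ K))⁻¹) ∧
      dirD (eTh d i) (fun q : Q d => (Complex.ofReal (f q.1 ^ K))⁻¹) = fun _ => 0 := by
  have fpos : ∀ r, 0 < f r := fun r => zero_lt_one.trans_le (hf.2.1 r)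
  have si : Differentiable ℝ (fun r => (f r ^ K)⁻¹) :=
    ((hf.1.pow K).inv fun r => (pow_pos (fpos r) K).ne').differentiable (by simp)
  have e : (fun q : Q d => (Complex.ofReal (f q.1 ^ K))⁻¹) =
      fun q : Q d => (((f q.1 ^ K)⁻¹ : ℝ) : ℂ) := by
    funext q; push_cast; rfl
  rw [e]
  have hd : Differentiable ℝ (fun q : Q d => (((f q.1 ^ K)⁻¹ : ℝ) : ℂ)) :=
    Complex.ofRealCLM.differentiable.comp (si.comp differentiable_fst)
  refine ⟨hd, ?_⟩
  funext q
  have h1 := congrFun (dirD_fst_r _ hd ((eTh d i, 0) : Q d × Q d)) (q, 0)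
  have h2 := congrFun (dirD_radial si ((eTh d i, 0) : Q d × Q d)) (q, 0)
  exact h1.symm.trans (h2.trans (by simp [eTh]))

theorem hbarDθ_one {f : ℝ → ℝ} (hf : GoodF f) {ℏ : ℝ} (hℏ : 0 < ℏ) {u : Q d → ℂ}
    (hu : IsCc u) {k m : ℝ} {a : Q d × Q d → ℂ} (ha : FSym f k m a) (c : ℂ) (K : ℕ) (i : Fin d) :
    hbarDθ d f ℏ i (fun q => (Complex.ofReal (f q.1 ^ K))⁻¹ * (c * JJ ℏ u a q)) =
      fun q => (Complex.ofReal (f q.1 ^ (K + 1)))⁻¹ * (c * JJ ℏ u (etaAdd d ℏ i a) q) := by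
  funext q
  unfold hbarDθ
  obtain ⟨h1, h2⟩ := dirD_th_radial (d := d) hf K i
  rw [dirD_mul _ h1 ((JJ_diff hf hℏ hu ha).const_mul c), h2,
    dirD_const_mul _ _ (JJ_diff hf hℏ hu ha), ← JJ_th hf hℏ hu ha, pow_succ]
  push_cast
  rw [mul_inv]
  ring

theorem hbarDθ_iter {f : ℝ → ℝ} (hf : GoodF f) {ℏ : ℝ} (hℏ : 0 < ℏ) {u : Q d → ℂ}
    (hu : IsCc u) {k m : ℝ} {a : Q d × Q d → ℂ} (ha : FSym f k m a) (c : ℂ) (K : ℕ) (i : Fin d)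
    (n : ℕ) :
    (hbarDθ d f ℏ i)^[n] (fun q => (Complex.ofReal (f q.1 ^ K))⁻¹ * (c * JJ ℏ u a q)) =
      fun q => (Complex.ofReal (f q.1 ^ (K + n)))⁻¹ * (c * JJ ℏ u ((etaAdd d ℏ i)^[n] a) q) := by
  induction n with
  | zero => rfl
  | succ n ih =>
    rw [Function.iterate_succ_apply', ih, Function.iterate_succ_apply',
      hbarDθ_one hf hℏ hu (sym_etaAdd_iter hf.2.1 ℏ i ha n)]
    rfl

theorem hbarDθ_fold {f : ℝ → ℝ} (hf : GoodF f) {ℏ : ℝ} (hℏ : 0 < ℏ) {u : Q d → ℂ}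
    (hu : IsCc u) {k m : ℝ} {a : Q d × Q d → ℂ} (ha : FSym f k m a) (c : ℂ) (n : Fin d → ℕ)
    (l : List (Fin d)) :
    l.foldr (fun i h => (hbarDθ d f ℏ i)^[n i] h) (fun q => c * JJ ℏ u a q) =
      fun q => (Complex.ofReal (f q.1 ^ ((l.map n).sum)))⁻¹ *
        (c * JJ ℏ u (l.foldr (fun i h => (etaAdd d ℏ i)^[n i] h) a) q) := by
  induction l with
  | nil => simp
  | cons i t ih =>
    simp only [List.foldr_cons, List.map_cons, List.sum_cons]
    rw [ih, hbarDθ_iter hf hℏ hu (sym_etaAdd_fold hf.2.1 ℏ ha n t), add_comm]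

theorem op_identity {f : ℝ → ℝ} (hf : GoodF f) (m₁ : ℕ) (m₂ : ℝ) {ℏ : ℝ} (hℏ : 0 < ℏ)
    (pc : MIdx d → Q d → ℂ)
    (a : Q d × Q d → ℂ) (ha : FSym f 0 m₂ a) {u : Q d → ℂ} (hu : IsCc u) (q : Q d) :
    diffOp d f ℏ m₁ pc (Op ℏ 1 a u) q = Op ℏ 1 (symbOfDiff d f ℏ m₁ pc a) u q := by
  rw [Op_JJ, Op_JJ]
  simp only
  set c : ℂ := ((((2 * Real.pi * ℏ) ^ (d + 1) : ℝ)⁻¹ : ℝ) : ℂ)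
  unfold diffOp
  have e : JJ ℏ u (symbOfDiff d f ℏ m₁ pc a) q = ∑ α ∈ idxSet d m₁,
      (pc α q * (Complex.ofReal (f q.1 ^ degA α))⁻¹) *
        JJ ℏ u ((List.finRange d).foldr (fun i h => (etaAdd d ℏ i)^[α.2 i] h)
          ((rhoAdd d ℏ)^[α.1] a)) q := by
    unfold JJ
    simp only [← integral_const_mul]
    rw [← integral_finsetSum]
    · congr 1
      funext p
      simp only [GG, symbOfDiff, Finset.sum_mul]
      refine Finset.sum_congr rfl fun α _ => by ring
    · intro α _
      exact ((sym_core hf.2.1 ℏ ha α).integrable hf hℏ hu q).const_mul _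
  rw [e, Finset.mul_sum]
  refine Finset.sum_congr rfl fun α _ => ?_
  rw [hbarDr_iter hf hℏ hu ha,
    hbarDθ_fold hf hℏ hu (sym_rhoAdd_iter hf.2.1 ℏ ha α.1), ← Fin.sum_univ_def]
  simp only [degA]
  ring

end aux

/-- composition of a differential operator with `Op^1_ℏ`. -/
theorem statement14 (d : ℕ) (f : ℝ → ℝ) (hf : GoodF f) (m₁ : ℕ) (m₂ : ℝ) (ℏ : ℝ)
    (hℏ : ℏ ∈ Set.Ioc (0 : ℝ) 1) (pc : MIdx d → Q d → ℂ)
    (hpc : ∀ α : MIdx d, ContDiff ℝ (⊤ : ℕ∞) (pc α) ∧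
      ∀ γ : MIdx d, ∃ C : ℝ, ∀ q : Q d,
        f q.1 ^ (-(degA γ : ℝ)) * ‖mderiv1 γ (pc α) q‖ ≤ C)
    (a : Q d × Q d → ℂ) (ha : IsSymbol f m₂ a) :
    IsSymbol f ((m₁ : ℝ) + m₂) (symbOfDiff d f ℏ m₁ pc a) ∧
    ∀ u : Q d → ℂ, IsCc u → ∀ q : Q d,
      diffOp d f ℏ m₁ pc (Op ℏ 1 a u) q = Op ℏ 1 (symbOfDiff d f ℏ m₁ pc a) u q := by
  exact ⟨(sym_symbOfDiff hf m₁ m₂ ℏ pc hpc a ha.fsym).isSymbol,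
    fun u hu q => op_identity hf m₁ m₂ hℏ.1 pc a ha.fsym hu q⟩

end
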